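/- Suppose ω∞(t), t ∈ (−∞, 0], is an ancient solution of the Kähler-Ricci flow ∂_t ω = −Ric(ω) on ℂ^{m+n} (standard complex structure) with identically vanishing scalar curvature and satisfying C⁻¹ ω_{ℂ^{m+n}} ≤ ω∞(t) ≤ C ω_{ℂ^{m+n}} for some C > 1 and all t ≤ 0. Then ω∞(t) is a constant-coefficient Kähler form, independent of both the space point and of t. -/

import Mathlib

noncomputable section

open Matrix

/-- Complex Euclidean space `ℂᴺ`. -/
abbrev Cn (N : ℕ) := EuclideanSpace ℂ (Fin N)

/-- The `j`-th standard coordinate direction in `ℂᴺ`. -/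
def coordDir (N : ℕ) (j : Fin N) : Cn N := EuclideanSpace.single j 1

/-- The Wirtinger derivative `∂f/∂z_j = (∂f/∂x_j - i ∂f/∂y_j)/2`. -/
def wdz {N : ℕ} (j : Fin N) (f : Cn N → ℂ) (x : Cn N) : ℂ :=
  (2 : ℂ)⁻¹ * (fderiv ℝ f x (coordDir N j) - Complex.I * fderiv ℝ f x (Complex.I • coordDir N j))

/-- The conjugate Wirtinger derivative `∂f/∂z̄_j = (∂f/∂x_j + i ∂f/∂y_j)/2`. -/
def wdzbar {N : ℕ} (j : Fin N) (f : Cn N → ℂ) (x : Cn N) : ℂ :=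
  (2 : ℂ)⁻¹ * (fderiv ℝ f x (coordDir N j) + Complex.I * fderiv ℝ f x (Complex.I • coordDir N j))

/-- The Ricci curvature `Ric_{i j̄} = -∂_{z_i} ∂_{z̄_j} log det g` of a Kähler metric on `ℂᴺ`
given by its matrix of coefficients `g_{i j̄}`. -/
def ricMat {N : ℕ} (g : Cn N → Matrix (Fin N) (Fin N) ℂ) (x : Cn N) :
    Matrix (Fin N) (Fin N) ℂ :=
  Matrix.of fun i j =>
    -(wdz i (fun y => wdzbar j (fun w => Complex.log ((g w).det)) y) x)

/-- `g` is (the coefficient matrix field of) a Kähler metric on `ℂᴺ` with its standard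
complex structure: smooth, Hermitian, and satisfying the Kähler symmetry
`∂_{z_k} g_{i j̄} = ∂_{z_i} g_{k j̄}`. -/
def IsKahlerMatrixField {N : ℕ} (g : Cn N → Matrix (Fin N) (Fin N) ℂ) : Prop :=
  (∀ i j : Fin N, ContDiff ℝ (⊤ : ℕ∞) (fun x => g x i j)) ∧ (∀ x, (g x).IsHermitian) ∧
    ∀ (x : Cn N) (i j k : Fin N), wdz k (fun y => g y i j) x = wdz i (fun y => g y k j) x

/-!
Vanishing scalar curvature makes `det g` constant along the flow, hence also the Ricci form
`-∂∂̄ log det g`. The flow is therefore affine in `t`, and being bounded for all `t ≤ 0` it is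
static and Ricci-flat.

For a Ricci-flat Kähler metric let `S = |Γ|²` be the squared norm of the Christoffel symbols. The
Bochner formula gives `Δ S ≥ 0`, and for a cutoff `φ` of radius `R` it bounds `Δ (φ² S)` below by
`-A R⁻² S` after completing squares, while `Δ tr g ≥ C⁻¹ S`. The maximum principle applied to
`φ² S + B R⁻² tr g` yields `S = O(R⁻²)`, so letting `R → ∞` gives `S = 0` and `g` is constant.
-/

open scoped ComplexOrder MatrixOrder ContDiff

section MatrixDeriv

variable {R A n : Type*} [CommRing R] [CommRing A] [Algebra R A]

/-- Entrywise application of a derivation to square matrices, as a linear map over the constants. -/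
def matrixDeriv (δ : Derivation R A A) : Matrix n n A →ₗ[R] Matrix n n A :=
  δ.toLinearMap.mapMatrix

@[simp]
lemma matrixDeriv_apply (δ : Derivation R A A) (M : Matrix n n A) (i j : n) :
    matrixDeriv δ M i j = δ (M i j) := rfl

lemma matrixDeriv_smul (δ : Derivation R A A) (a : A) (M : Matrix n n A) :
    matrixDeriv δ (a • M) = δ a • M + a • matrixDeriv δ M := by
  ext i j
  simp [mul_comm, add_comm]

lemma matrixDeriv_one [DecidableEq n] (δ : Derivation R A A) :
    matrixDeriv δ (1 : Matrix n n A) = 0 := by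
  ext i j
  rcases eq_or_ne i j with rfl | h <;> simp [*]

variable [Fintype n]

lemma matrixDeriv_mul (δ : Derivation R A A) (M P : Matrix n n A) :
    matrixDeriv δ (M * P) = matrixDeriv δ M * P + M * matrixDeriv δ P := by
  ext i j
  simp [Matrix.mul_apply, Finset.sum_add_distrib, mul_comm, add_comm]

lemma trace_matrixDeriv (δ : Derivation R A A) (M : Matrix n n A) :
    (matrixDeriv δ M).trace = δ M.trace := by
  simp [Matrix.trace]

lemma matrixDeriv_inv [DecidableEq n] (δ : Derivation R A A) {M : Matrix n n A}
    (hM : IsUnit M.det) : matrixDeriv δ M⁻¹ = -(M⁻¹ * matrixDeriv δ M * M⁻¹) := by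
  have h := matrixDeriv_mul δ M M⁻¹
  rw [M.mul_nonsing_inv hM, matrixDeriv_one, eq_comm, add_comm, add_eq_zero_iff_eq_neg] at h
  rw [← M.nonsing_inv_mul_cancel_left (matrixDeriv δ M⁻¹) hM, h, Matrix.mul_neg, Matrix.mul_assoc]

end MatrixDeriv

section SesquilinearForms

variable {A V n ι : Type*} [CommRing A] [AddCommGroup V] [Module A V] [Fintype n] [Fintype ι]

/-- Contraction of a family of vectors against the weights `H`. The weight of `T i j` is `H j i`,
the index convention `g^{j̄ i} T_{i j̄}` for the inverse of a Hermitian metric. -/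
def contract (H : Matrix ι ι A) : (ι → ι → V) →ₗ[A] V where
  toFun T := ∑ i, ∑ j, H j i • T i j
  map_add' T T' := by simp [Finset.sum_add_distrib]
  map_smul' a T := by simp [Finset.smul_sum, smul_comm a]

lemma contract_apply (H : Matrix ι ι A) (T : ι → ι → V) :
    contract H T = ∑ i, ∑ j, H j i • T i j := rfl

lemma contract_add (H : Matrix ι ι A) (T T' : ι → ι → V) :
    contract H (fun i j => T i j + T' i j) = contract H T + contract H T' :=
  map_add (contract H) T T'

lemma contract_sub (H : Matrix ι ι A) (T T' : ι → ι → V) :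
    contract H (fun i j => T i j - T' i j) = contract H T - contract H T' :=
  map_sub (contract H) T T'

lemma contract_const_mul (H : Matrix ι ι A) (a : A) (T : ι → ι → A) :
    contract H (fun i j => a * T i j) = a * contract H T :=
  map_smul (contract H) a T

lemma linearMap_contract {W : Type*} [AddCommGroup W] [Module A W] (f : V →ₗ[A] W)
    (H : Matrix ι ι A) (T : ι → ι → V) : f (contract H T) = contract H fun i j => f (T i j) := by
  simp [contract_apply]

lemma contract_pi_apply {κ : Type*} (H : Matrix ι ι A) (T : ι → ι → κ → V) (k : κ) :
    contract H T k = contract H fun i j => T i j k := by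
  simp [contract_apply]

lemma ringHom_contract {B F : Type*} [CommRing B] [FunLike F A B] [RingHomClass F A B] (e : F)
    (H : Matrix ι ι A) (T : ι → ι → A) :
    e (contract H T) = contract (H.map e) fun i j => e (T i j) := by
  simp [contract_apply]

variable [StarRing A]

lemma sesquilinear_contract_left (q : V →ₗ[A] V →ₛₗ[starRingEnd A] A) (H : Matrix ι ι A)
    (T : ι → ι → V) (w : V) : q (contract H T) w = contract H fun i j => q (T i j) w := by
  simp [contract_apply]

lemma star_contract {H : Matrix ι ι A} (hH : H.IsHermitian) (T : ι → ι → A) :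
    star (contract H T) = contract H fun i j => star (T j i) := by
  rw [contract_apply, contract_apply, Finset.sum_comm]
  simp [hH.apply]

/-- The sesquilinear form `(X, Y) ↦ tr (X Q Yᴴ P)` on square matrices. -/
def traceForm (Q P : Matrix n n A) :
    Matrix n n A →ₗ[A] Matrix n n A →ₛₗ[starRingEnd A] A :=
  LinearMap.mk₂'ₛₗ _ _ (fun X Y => (X * Q * Yᴴ * P).trace)
    (by simp [Matrix.add_mul]) (by simp) (by simp [Matrix.mul_add, Matrix.add_mul])
    (by simp [starRingEnd_apply])

lemma traceForm_apply (Q P X Y : Matrix n n A) :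
    traceForm Q P X Y = (X * Q * Yᴴ * P).trace := rfl

/-- The sesquilinear form on `V`-valued families induced by the weights `H` and a sesquilinear form
`q` on `V`. -/
def weightedForm (H : Matrix ι ι A) (q : V →ₗ[A] V →ₛₗ[starRingEnd A] A) :
    (ι → V) →ₗ[A] (ι → V) →ₛₗ[starRingEnd A] A :=
  LinearMap.mk₂'ₛₗ _ _ (fun X Y => contract H fun k l => q (X k) (Y l))
    (by intro X X' Y; simp [contract_apply, mul_add, Finset.sum_add_distrib])
    (by intro a X Y; simp [contract_apply, Finset.mul_sum, mul_left_comm])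
    (by intro X Y Y'; simp [contract_apply, mul_add, Finset.sum_add_distrib])
    (by intro a X Y; simp [contract_apply, Finset.mul_sum, mul_left_comm])

lemma weightedForm_apply (H : Matrix ι ι A) (q : V →ₗ[A] V →ₛₗ[starRingEnd A] A) (X Y : ι → V) :
    weightedForm H q X Y = contract H fun k l => q (X k) (Y l) := rfl

lemma weightedForm_transpose_apply (H : Matrix ι ι A) (q : V →ₗ[A] V →ₛₗ[starRingEnd A] A)
    (X Y : ι → V) : weightedForm Hᵀ q X Y = contract H fun k l => q (X l) (Y k) :=
  Finset.sum_comm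

lemma star_traceForm {Q P : Matrix n n A} (hQ : Q.IsHermitian) (hP : P.IsHermitian)
    (X Y : Matrix n n A) : star (traceForm Q P X Y) = traceForm Q P Y X := by
  simp only [traceForm_apply, ← Matrix.trace_conjTranspose, Matrix.conjTranspose_mul, hQ.eq, hP.eq,
    Matrix.conjTranspose_conjTranspose]
  rw [Matrix.trace_mul_comm]
  simp only [Matrix.mul_assoc]

lemma star_weightedForm {H : Matrix ι ι A} (hH : H.IsHermitian)
    {q : V →ₗ[A] V →ₛₗ[starRingEnd A] A} (hq : ∀ v w, star (q v w) = q w v) (X Y : ι → V) :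
    star (weightedForm H q X Y) = weightedForm H q Y X := by
  simp only [weightedForm_apply, star_contract hH, hq]

section Map

variable {B W F : Type*} [CommRing B] [StarRing B] [AddCommGroup W] [Module B W] [FunLike F A B]
  [RingHomClass F A B]

lemma map_traceForm [StarHomClass F A B] (e : F) (Q P X Y : Matrix n n A) :
    e (traceForm Q P X Y) = traceForm (Q.map e) (P.map e) (X.map e) (Y.map e) := by
  rw [traceForm_apply, traceForm_apply, AddMonoidHom.map_trace e]
  simp [Matrix.map_mul, Matrix.conjTranspose_map _ (map_star e)]

lemma map_weightedForm (e : F) (u : V → W) (H : Matrix ι ι A)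
    {q : V →ₗ[A] V →ₛₗ[starRingEnd A] A} {q' : W →ₗ[B] W →ₛₗ[starRingEnd B] B}
    (h : ∀ v w, e (q v w) = q' (u v) (u w)) (X Y : ι → V) :
    e (weightedForm H q X Y) =
      weightedForm (H.map e) q' (fun k => u (X k)) (fun k => u (Y k)) := by
  simp only [weightedForm_apply, ringHom_contract, h]

end Map

end SesquilinearForms

section Positivity

variable {V n ι : Type*} [AddCommGroup V] [Module ℂ V] [Fintype n] [Fintype ι]

lemma exists_eq_conjTranspose_mul_self {H : Matrix ι ι ℂ} (hH : H.PosSemidef) :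
    ∃ B : Matrix ι ι ℂ, H = Bᴴ * B := by
  classical
  exact CStarAlgebra.nonneg_iff_eq_star_mul_self.mp (Matrix.nonneg_iff_posSemidef.mpr hH)

lemma exists_isUnit_det_eq_conjTranspose_mul_self [DecidableEq ι] {H : Matrix ι ι ℂ}
    (hH : H.PosDef) : ∃ B : Matrix ι ι ℂ, IsUnit B.det ∧ H = Bᴴ * B := by
  obtain ⟨B, rfl⟩ := exists_eq_conjTranspose_mul_self hH.posSemidef
  have hdet := (Matrix.isUnit_iff_isUnit_det _).mp hH.isUnit
  rw [Matrix.det_mul] at hdet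
  exact ⟨B, isUnit_of_mul_isUnit_right hdet, rfl⟩

lemma weightedForm_conjTranspose_mul_self (B : Matrix ι ι ℂ) (q : V →ₗ[ℂ] V →ₛₗ[starRingEnd ℂ] ℂ)
    (X Y : ι → V) :
    weightedForm (Bᴴ * B) q X Y = ∑ p, q (∑ k, B p k • X k) (∑ k, B p k • Y k) := by
  simp only [weightedForm_apply, contract_apply, Matrix.mul_apply, Matrix.conjTranspose_apply,
    map_sum, map_smulₛₗ, LinearMap.sum_apply, LinearMap.smul_apply, smul_eq_mul, Finset.sum_mul,
    Finset.mul_sum, RingHom.id_apply, starRingEnd_apply]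
  rw [Finset.sum_comm_cycle]
  refine Finset.sum_congr rfl fun p _ => ?_
  rw [Finset.sum_comm]
  refine Finset.sum_congr rfl fun k _ => Finset.sum_congr rfl fun l _ => by ring

lemma weightedForm_self_nonneg {H : Matrix ι ι ℂ} (hH : H.PosSemidef)
    {q : V →ₗ[ℂ] V →ₛₗ[starRingEnd ℂ] ℂ} (hq : ∀ v, 0 ≤ q v v) (X : ι → V) :
    0 ≤ weightedForm H q X X := by
  obtain ⟨B, rfl⟩ := exists_eq_conjTranspose_mul_self hH
  rw [weightedForm_conjTranspose_mul_self]
  exact Finset.sum_nonneg fun p _ => hq _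

lemma eq_zero_of_weightedForm_self_eq_zero {H : Matrix ι ι ℂ} (hH : H.PosDef)
    {q : V →ₗ[ℂ] V →ₛₗ[starRingEnd ℂ] ℂ} (hq : ∀ v, 0 ≤ q v v) (hq0 : ∀ v, q v v = 0 → v = 0)
    {X : ι → V} (hX : weightedForm H q X X = 0) : X = 0 := by
  classical
  obtain ⟨B, hB, rfl⟩ := exists_isUnit_det_eq_conjTranspose_mul_self hH
  rw [weightedForm_conjTranspose_mul_self, Finset.sum_eq_zero_iff_of_nonneg fun p _ => hq _] at hX
  have hBX : ∀ p, ∑ k, B p k • X k = 0 := fun p => hq0 _ (hX p (Finset.mem_univ p))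
  funext i
  calc X i = ∑ k, (B⁻¹ * B) i k • X k := by simp [B.nonsing_inv_mul hB, Matrix.one_apply]
    _ = ∑ p, B⁻¹ i p • ∑ k, B p k • X k := by
      simp only [Matrix.mul_apply, Finset.sum_smul, Finset.smul_sum, mul_smul]
      exact Finset.sum_comm
    _ = 0 := by simp [hBX]

lemma traceForm_conjTranspose_mul_self (D B X : Matrix n n ℂ) :
    traceForm (Dᴴ * D) (Bᴴ * B) X X = (B * X * Dᴴ * (B * X * Dᴴ)ᴴ).trace := by
  rw [traceForm_apply, ← Matrix.mul_assoc, Matrix.trace_mul_comm]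
  simp only [Matrix.conjTranspose_mul, Matrix.conjTranspose_conjTranspose, Matrix.mul_assoc]

lemma traceForm_self_nonneg {Q P : Matrix n n ℂ} (hQ : Q.PosSemidef) (hP : P.PosSemidef)
    (X : Matrix n n ℂ) : 0 ≤ traceForm Q P X X := by
  obtain ⟨B, rfl⟩ := exists_eq_conjTranspose_mul_self hP
  obtain ⟨D, rfl⟩ := exists_eq_conjTranspose_mul_self hQ
  rw [traceForm_conjTranspose_mul_self]
  exact (Matrix.posSemidef_self_mul_conjTranspose _).trace_nonneg

lemma eq_zero_of_traceForm_self_eq_zero {Q P : Matrix n n ℂ} (hQ : Q.PosDef) (hP : P.PosDef)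
    {X : Matrix n n ℂ} (hX : traceForm Q P X X = 0) : X = 0 := by
  classical
  obtain ⟨B, hB, rfl⟩ := exists_isUnit_det_eq_conjTranspose_mul_self hP
  obtain ⟨D, hD, rfl⟩ := exists_isUnit_det_eq_conjTranspose_mul_self hQ
  rw [traceForm_conjTranspose_mul_self, Matrix.trace_mul_conjTranspose_self_eq_zero_iff] at hX
  have hD' : IsUnit Dᴴ.det := by rw [Matrix.det_conjTranspose]; exact hD.star
  calc X = B⁻¹ * (B * X * Dᴴ) * Dᴴ⁻¹ := by
        rw [Matrix.mul_assoc B, Matrix.nonsing_inv_mul_cancel_left _ _ hB,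
          Matrix.mul_nonsing_inv_cancel_right _ _ hD']
    _ = 0 := by rw [hX, Matrix.mul_zero, Matrix.zero_mul]

end Positivity

section ComplexFrame

/-- Derivations `∂_i` and `∂̄_i` of a star algebra satisfying the algebraic identities of the
Wirtinger derivatives on smooth functions. -/
structure ComplexFrame (R A ι : Type*) [CommRing R] [CommRing A] [StarRing A] [Algebra R A] where
  d : ι → Derivation R A A
  dbar : ι → Derivation R A A
  star_d : ∀ i a, star (d i a) = dbar i (star a)
  d_comm : ∀ i j a, d i (d j a) = d j (d i a)
  dbar_d_comm : ∀ i j a, dbar i (d j a) = d j (dbar i a)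

variable {R A ι : Type*} [CommRing R] [CommRing A] [StarRing A] [Algebra R A]

namespace ComplexFrame

variable (𝓕 : ComplexFrame R A ι)

lemma star_dbar (i : ι) (a : A) : star (𝓕.dbar i a) = 𝓕.d i (star a) := by
  rw [← star_star (𝓕.d i (star a)), 𝓕.star_d, star_star]

lemma matrixDeriv_d_conjTranspose {n : Type*} (i : ι) (M : Matrix n n A) :
    matrixDeriv (𝓕.d i) Mᴴ = (matrixDeriv (𝓕.dbar i) M)ᴴ := by
  ext a b
  simp [𝓕.star_dbar]

lemma matrixDeriv_dbar_conjTranspose {n : Type*} (i : ι) (M : Matrix n n A) :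
    matrixDeriv (𝓕.dbar i) Mᴴ = (matrixDeriv (𝓕.d i) M)ᴴ := by
  ext a b
  simp [𝓕.star_d]

lemma matrixDeriv_d_comm {n : Type*} (i j : ι) (M : Matrix n n A) :
    matrixDeriv (𝓕.d i) (matrixDeriv (𝓕.d j) M) = matrixDeriv (𝓕.d j) (matrixDeriv (𝓕.d i) M) := by
  ext a b
  simp [𝓕.d_comm i j]

lemma matrixDeriv_dbar_d_comm {n : Type*} (i j : ι) (M : Matrix n n A) :
    matrixDeriv (𝓕.dbar i) (matrixDeriv (𝓕.d j) M) =
      matrixDeriv (𝓕.d j) (matrixDeriv (𝓕.dbar i) M) := by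
  ext a b
  simp [𝓕.dbar_d_comm]

end ComplexFrame

/-- The coefficient matrix `g_{i j̄}` of a nondegenerate Kähler metric in the frame `𝓕`. -/
structure KahlerMetric [Fintype ι] [DecidableEq ι] (𝓕 : ComplexFrame R A ι) where
  g : Matrix ι ι A
  isHermitian : g.IsHermitian
  isUnit_det : IsUnit g.det
  d_apply_comm : ∀ i j k, 𝓕.d k (g i j) = 𝓕.d i (g k j)

end ComplexFrame

namespace KahlerMetric

variable {R A ι : Type*} [CommRing R] [CommRing A] [StarRing A] [Algebra R A] [Fintype ι]
  [DecidableEq ι] {𝓕 : ComplexFrame R A ι} (K : KahlerMetric 𝓕)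

/-- The connection matrices of the Chern connection: `K.christoffel i k p` is `Γ_{ik}^p`. -/
def christoffel (i : ι) : Matrix ι ι A := matrixDeriv (𝓕.d i) K.g * K.g⁻¹

local notation "Γ" => christoffel K

lemma mul_inv : K.g * K.g⁻¹ = 1 := K.g.mul_nonsing_inv K.isUnit_det

lemma inv_mul : K.g⁻¹ * K.g = 1 := K.g.nonsing_inv_mul K.isUnit_det

lemma matrixDeriv_d (i : ι) : matrixDeriv (𝓕.d i) K.g = Γ i * K.g := by
  rw [christoffel, Matrix.mul_assoc, K.inv_mul, Matrix.mul_one]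

lemma matrixDeriv_dbar (i : ι) : matrixDeriv (𝓕.dbar i) K.g = K.g * (Γ i)ᴴ := by
  rw [← K.isHermitian.eq, 𝓕.matrixDeriv_dbar_conjTranspose, matrixDeriv_d,
    Matrix.conjTranspose_mul, K.isHermitian.eq]

lemma matrixDeriv_d_inv (i : ι) : matrixDeriv (𝓕.d i) K.g⁻¹ = -(K.g⁻¹ * Γ i) := by
  rw [matrixDeriv_inv _ K.isUnit_det, christoffel, Matrix.mul_assoc]

lemma christoffel_symm (i k p : ι) : Γ i k p = Γ k i p := by
  simp only [christoffel, Matrix.mul_apply, matrixDeriv_apply, K.d_apply_comm k _ i]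

lemma dbar_apply_comm (i j k : ι) : 𝓕.dbar k (K.g i j) = 𝓕.dbar j (K.g i k) := by
  rw [← K.isHermitian.apply i j, ← 𝓕.star_d, K.d_apply_comm, 𝓕.star_d, K.isHermitian.apply]

lemma leibniz_contract {V : Type*} [AddCommGroup V] [Module A V] (i : ι) (δ : V →+ V)
    (hδ : ∀ (a : A) (v : V), δ (a • v) = 𝓕.d i a • v + a • δ v) (T : ι → ι → V) :
    δ (contract K.g⁻¹ T) = contract K.g⁻¹ fun k l => δ (T k l) - ∑ p, Γ i k p • T p l := by
  have hinv : ∀ k l, 𝓕.d i (K.g⁻¹ l k) = -∑ p, K.g⁻¹ l p * Γ i p k := fun k l => by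
    simpa [Matrix.mul_apply] using congrFun₂ (K.matrixDeriv_d_inv i) l k
  simp only [contract_apply, map_sum, hδ, hinv, smul_sub, Finset.sum_add_distrib,
    Finset.sum_sub_distrib, neg_smul, Finset.sum_neg_distrib, Finset.sum_smul, Finset.smul_sum,
    smul_smul]
  rw [neg_add_eq_sub, sub_right_inj, Finset.sum_comm_cycle]
  exact Finset.sum_congr rfl fun k _ => Finset.sum_comm

/-- The covariant derivative along `∂_i` of an endomorphism field. -/
def endDeriv (i : ι) : Matrix ι ι A →+ Matrix ι ι A where
  toFun M := matrixDeriv (𝓕.d i) M + M * Γ i - Γ i * M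
  map_zero' := by simp
  map_add' M P := by rw [map_add, Matrix.add_mul, Matrix.mul_add]; abel

lemma endDeriv_apply (i : ι) (M : Matrix ι ι A) :
    K.endDeriv i M = matrixDeriv (𝓕.d i) M + M * Γ i - Γ i * M := rfl

lemma endDeriv_smul (i : ι) (a : A) (M : Matrix ι ι A) :
    K.endDeriv i (a • M) = 𝓕.d i a • M + a • K.endDeriv i M := by
  simp only [endDeriv_apply, matrixDeriv_smul, Matrix.smul_mul, Matrix.mul_smul, smul_sub, smul_add]
  abel

/-- The covariant derivative along `∂_i` of an endomorphism-valued `(1,0)`-form. -/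
def covDeriv (i : ι) (X : ι → Matrix ι ι A) (k : ι) : Matrix ι ι A :=
  K.endDeriv i (X k) - ∑ p, Γ i k p • X p

/-- The `∂̄_j` derivative of an endomorphism-valued `(1,0)`-form. -/
def dbarForm (𝓕 : ComplexFrame R A ι) (j : ι) (X : ι → Matrix ι ι A) (k : ι) : Matrix ι ι A :=
  matrixDeriv (𝓕.dbar j) (X k)

/-- The Hermitian form induced by the metric on endomorphisms. -/
abbrev endForm : Matrix ι ι A →ₗ[A] Matrix ι ι A →ₛₗ[starRingEnd A] A :=
  traceForm K.g K.g⁻¹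

/-- The Hermitian form induced by the metric on endomorphism-valued `(1,0)`-forms. -/
abbrev form : (ι → Matrix ι ι A) →ₗ[A] (ι → Matrix ι ι A) →ₛₗ[starRingEnd A] A :=
  weightedForm K.g⁻¹ K.endForm

lemma star_form (X Y : ι → Matrix ι ι A) : star (K.form X Y) = K.form Y X :=
  star_weightedForm K.isHermitian.inv (star_traceForm K.isHermitian K.isHermitian.inv) X Y

lemma d_endForm (i : ι) (M P : Matrix ι ι A) :
    𝓕.d i (K.endForm M P) =
      K.endForm (K.endDeriv i M) P + K.endForm M (matrixDeriv (𝓕.dbar i) P) := by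
  have hcycle : (M * K.g * Pᴴ * (K.g⁻¹ * Γ i)).trace = (Γ i * M * K.g * Pᴴ * K.g⁻¹).trace := by
    rw [← Matrix.mul_assoc, Matrix.trace_mul_comm]
    simp only [Matrix.mul_assoc]
  simp only [traceForm_apply, ← trace_matrixDeriv, matrixDeriv_mul, 𝓕.matrixDeriv_d_conjTranspose,
    matrixDeriv_d, matrixDeriv_d_inv, endDeriv_apply, Matrix.add_mul, Matrix.sub_mul,
    Matrix.trace_add, Matrix.trace_sub, Matrix.mul_neg, Matrix.trace_neg, hcycle]
  simp only [Matrix.mul_assoc]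
  ring

lemma d_form (i : ι) (X Y : ι → Matrix ι ι A) :
    𝓕.d i (K.form X Y) = K.form (K.covDeriv i X) Y + K.form X (dbarForm 𝓕 i Y) := by
  have hleibniz := K.leibniz_contract i (𝓕.d i : A →+ A) (by simp [mul_comm, add_comm])
    fun k l => K.endForm (X k) (Y l)
  simp only [weightedForm_apply, ← map_add]
  refine hleibniz.trans (congrArg _ (funext₂ fun k l => ?_))
  simp [d_endForm, covDeriv, dbarForm]
  abel

lemma dbar_form (j : ι) (X Y : ι → Matrix ι ι A) :
    𝓕.dbar j (K.form X Y) = K.form (dbarForm 𝓕 j X) Y + K.form X (K.covDeriv j Y) := by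
  rw [← K.star_form Y X, ← 𝓕.star_d, d_form, star_add, star_form, star_form, add_comm]

/-- The `(1,1)`-form part of the curvature, as the family of endomorphisms `∂̄_j Γ_k`. -/
def curvature (j k : ι) : Matrix ι ι A := matrixDeriv (𝓕.dbar j) (Γ k)

/-- Vanishing of the Ricci form, written as the trace of the curvature. -/
def IsRicciFlat : Prop := ∀ j k, (K.curvature j k).trace = 0

lemma curvature_mul (j k : ι) :
    K.curvature j k * K.g = matrixDeriv (𝓕.dbar j) (matrixDeriv (𝓕.d k) K.g) -
      matrixDeriv (𝓕.d k) K.g * K.g⁻¹ * matrixDeriv (𝓕.dbar j) K.g := by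
  rw [curvature, ← christoffel, eq_sub_iff_add_eq, ← matrixDeriv_mul, ← matrixDeriv_d]

lemma curvature_mul_symm (i j a b : ι) :
    (K.curvature j i * K.g) a b = (K.curvature b a * K.g) i j := by
  rw [curvature_mul, curvature_mul]
  simp only [Matrix.sub_apply, Matrix.mul_apply, matrixDeriv_apply]
  congr 1
  · rw [K.d_apply_comm, 𝓕.dbar_d_comm, K.dbar_apply_comm, 𝓕.dbar_d_comm]
  · simp only [K.dbar_apply_comm _ b j, K.d_apply_comm a _ i]

/-- By the Kähler symmetry the metric trace of the curvature is its endomorphism trace with an index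
raised. -/
lemma contract_curvature_eq_zero (hK : K.IsRicciFlat) :
    contract K.g⁻¹ (fun i j => K.curvature j i) = 0 := by
  suffices h : contract K.g⁻¹ (fun i j => K.curvature j i) * K.g = 0 by
    rw [← Matrix.mul_nonsing_inv_cancel_right _ (contract _ _) K.isUnit_det, h, Matrix.zero_mul]
  ext a b
  calc (contract K.g⁻¹ (fun i j => K.curvature j i) * K.g) a b
      = ∑ i, ∑ j, (K.curvature b a * K.g) i j * K.g⁻¹ j i := by
        simp only [contract_apply, Matrix.sum_mul, Matrix.smul_mul, Matrix.sum_apply,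
          Matrix.smul_apply, smul_eq_mul, K.curvature_mul_symm _ _ a b, mul_comm]
    _ = (K.curvature b a * K.g * K.g⁻¹).trace :=
        Finset.sum_congr rfl fun i _ => (Matrix.mul_apply ..).symm
    _ = 0 := by rw [Matrix.mul_nonsing_inv_cancel_right _ _ K.isUnit_det, hK]

lemma matrixDeriv_christoffel_add (i k : ι) :
    matrixDeriv (𝓕.d i) (Γ k) + Γ k * Γ i = matrixDeriv (𝓕.d k) (Γ i) + Γ i * Γ k := by
  have hsecond : ∀ i k, matrixDeriv (𝓕.d i) (Γ k) + Γ k * Γ i =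
      matrixDeriv (𝓕.d i) (matrixDeriv (𝓕.d k) K.g) * K.g⁻¹ := fun i k => by
    rw [christoffel, matrixDeriv_mul, matrixDeriv_d_inv, Matrix.mul_neg, Matrix.mul_assoc,
      neg_add_cancel_right]
  rw [hsecond, hsecond, 𝓕.matrixDeriv_d_comm]

/-- The second Bianchi identity. -/
lemma endDeriv_curvature_symm (i j k : ι) :
    K.endDeriv i (K.curvature j k) = K.endDeriv k (K.curvature j i) := by
  have h := congrArg (matrixDeriv (𝓕.dbar j)) (K.matrixDeriv_christoffel_add i k)
  simp only [map_add, matrixDeriv_mul, 𝓕.matrixDeriv_dbar_d_comm] at h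
  rw [endDeriv_apply, endDeriv_apply, sub_eq_sub_iff_add_eq_add, add_assoc, add_assoc]
  exact h

lemma contract_covDeriv_curvature_eq_zero (hK : K.IsRicciFlat) :
    contract K.g⁻¹ (fun i j => K.covDeriv i (K.curvature j)) = 0 := by
  funext k
  have h := K.leibniz_contract k (K.endDeriv k) (K.endDeriv_smul k) fun i j => K.curvature j i
  rw [K.contract_curvature_eq_zero hK, map_zero] at h
  simp only [contract_pi_apply, covDeriv, K.endDeriv_curvature_symm _ _ k, K.christoffel_symm _ k]
  exact h.symm

/-- The action of an endomorphism of the holomorphic tangent bundle on endomorphism-valued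
`(1,0)`-forms. -/
def endAction : Matrix ι ι A →ₗ[A] (ι → Matrix ι ι A) →ₗ[A] (ι → Matrix ι ι A) :=
  LinearMap.mk₂ A (fun M X k => X k * M - M * X k - ∑ p, M k p • X p)
    (by
      intro M M' X
      funext k
      simp [Matrix.add_mul, Matrix.mul_add, add_smul, Finset.sum_add_distrib]
      abel)
    (by intro a M X; funext k; simp [smul_sub, Finset.smul_sum, mul_smul])
    (by
      intro M X X'
      funext k
      simp [Matrix.add_mul, Matrix.mul_add, Finset.sum_add_distrib]
      abel)
    (by intro a M X; funext k; simp [smul_sub, Finset.smul_sum, smul_comm a])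

/-- The Ricci identity commuting `∂̄_j` with the covariant derivative. -/
lemma dbarForm_covDeriv (i j : ι) (X : ι → Matrix ι ι A) :
    dbarForm 𝓕 j (K.covDeriv i X) =
      K.covDeriv i (dbarForm 𝓕 j X) + endAction (K.curvature j i) X := by
  funext k
  simp only [dbarForm, covDeriv, endDeriv_apply, endAction, LinearMap.mk₂_apply, Pi.add_apply,
    map_add, map_sub, map_sum, matrixDeriv_mul, matrixDeriv_smul, 𝓕.matrixDeriv_dbar_d_comm,
    Finset.sum_add_distrib, curvature, matrixDeriv_apply]
  abel

lemma contract_dbarForm_covDeriv_christoffel_eq_zero (hK : K.IsRicciFlat) :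
    contract K.g⁻¹ (fun i j => dbarForm 𝓕 j (K.covDeriv i K.christoffel)) = 0 := by
  have haction : contract K.g⁻¹ (fun i j => endAction (K.curvature j i) K.christoffel) = 0 := by
    refine (linearMap_contract (endAction.flip K.christoffel) _ _).symm.trans ?_
    rw [K.contract_curvature_eq_zero hK, map_zero]
  simp only [dbarForm_covDeriv]
  rw [contract_add, haction, add_zero]
  exact K.contract_covDeriv_curvature_eq_zero hK

/-- The complex Laplacian `g^{j̄ i} ∂_i ∂̄_j` of the metric. -/
def laplacian : A →ₗ[R] A where
  toFun f := contract K.g⁻¹ fun i j => 𝓕.d i (𝓕.dbar j f)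
  map_add' f h := by simp [contract_apply, mul_add, Finset.sum_add_distrib]
  map_smul' r f := by simp [contract_apply, Finset.smul_sum]

lemma laplacian_apply (f : A) : K.laplacian f = contract K.g⁻¹ fun i j => 𝓕.d i (𝓕.dbar j f) := rfl

/-- The squared length `g^{j̄ i} ∂_i φ ∂̄_j φ` of the gradient of a real function `φ`. -/
def gradSq (φ : A) : A := contract K.g⁻¹ fun i j => 𝓕.d i φ * 𝓕.dbar j φ

/-- Calabi's third-order quantity `S = |Γ|²`. -/
def calabi : A := K.form K.christoffel K.christoffel

lemma laplacian_trace (hK : K.IsRicciFlat) :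
    K.laplacian K.g.trace = weightedForm K.g⁻¹ (traceForm K.g 1) K.christoffel K.christoffel := by
  have hsecond : ∀ i j, 𝓕.d i (𝓕.dbar j K.g.trace) =
      (K.curvature j i * K.g).trace + traceForm K.g 1 (Γ i) (Γ j) := fun i j => by
    rw [← 𝓕.dbar_d_comm, ← trace_matrixDeriv, ← trace_matrixDeriv, matrixDeriv_d, matrixDeriv_mul,
      matrixDeriv_dbar, Matrix.trace_add, traceForm_apply, Matrix.mul_one, Matrix.mul_assoc]
    rfl
  have hcurv : contract K.g⁻¹ (fun i j => (K.curvature j i * K.g).trace) = 0 := by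
    refine (linearMap_contract ((Matrix.traceLinearMap ι A A).comp (LinearMap.mulRight A K.g))
      _ _).symm.trans ?_
    rw [K.contract_curvature_eq_zero hK, map_zero]
  simp only [laplacian_apply, hsecond]
  rw [contract_add, hcurv, zero_add, weightedForm_apply]

lemma contract_form_covDeriv_curvature_add_eq_zero (hK : K.IsRicciFlat) :
    contract K.g⁻¹ (fun i j => K.form (K.covDeriv i (K.curvature j)) K.christoffel +
      K.form K.christoffel (dbarForm 𝓕 i (K.covDeriv j K.christoffel))) = 0 := by
  have hcov : contract K.g⁻¹
      (fun i j => K.form (K.covDeriv i (K.curvature j)) K.christoffel) = 0 := by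
    rw [← sesquilinear_contract_left, K.contract_covDeriv_curvature_eq_zero hK, map_zero,
      LinearMap.zero_apply]
  have hdbar : contract K.g⁻¹ (fun i j =>
      K.form (dbarForm 𝓕 j (K.covDeriv i K.christoffel)) K.christoffel) = 0 := by
    rw [← sesquilinear_contract_left, K.contract_dbarForm_covDeriv_christoffel_eq_zero hK, map_zero,
      LinearMap.zero_apply]
  rw [contract_add, hcov, zero_add, ← star_zero A, ← hdbar, star_contract K.isHermitian.inv]
  simp only [star_form]

lemma d_dbar_mul_calabi {φ : A} (hφ : star φ = φ) (i j : ι) :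
    𝓕.d i (𝓕.dbar j (φ * φ * K.calabi)) =
      K.form (φ • K.curvature j + (2 * 𝓕.dbar j φ) • K.christoffel)
        (φ • K.curvature i + (2 * 𝓕.dbar i φ) • K.christoffel) +
      K.form (φ • K.covDeriv i K.christoffel + (2 * 𝓕.d i φ) • K.christoffel)
        (φ • K.covDeriv j K.christoffel + (2 * 𝓕.d j φ) • K.christoffel) +
      K.calabi * (2 * φ * 𝓕.d i (𝓕.dbar j φ) - 6 * (𝓕.d i φ * 𝓕.dbar j φ)) +
      φ * φ * (K.form (K.covDeriv i (K.curvature j)) K.christoffel +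
        K.form K.christoffel (dbarForm 𝓕 i (K.covDeriv j K.christoffel))) := by
  have hd : ∀ i, star (𝓕.d i φ) = 𝓕.dbar i φ := fun i => by rw [𝓕.star_d, hφ]
  have hdbar : ∀ i, star (𝓕.dbar i φ) = 𝓕.d i φ := fun i => by rw [𝓕.star_dbar, hφ]
  have hcurv : ∀ j, dbarForm 𝓕 j K.christoffel = K.curvature j := fun j => rfl
  simp only [calabi, Derivation.leibniz, smul_eq_mul, map_add, dbar_form, d_form, hcurv,
    LinearMap.add_apply, LinearMap.smul_apply, map_smulₛₗ, RingHom.id_apply, starRingEnd_apply,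
    star_mul', hφ, hd, hdbar, star_ofNat]
  ring

/-- The Bochner formula, with squares completed, for `φ² S`. -/
lemma laplacian_mul_calabi (hK : K.IsRicciFlat) {φ : A} (hφ : star φ = φ) :
    K.laplacian (φ * φ * K.calabi) =
      weightedForm K.g⁻¹ᵀ K.form
        (fun j => φ • K.curvature j + (2 * 𝓕.dbar j φ) • K.christoffel)
        (fun j => φ • K.curvature j + (2 * 𝓕.dbar j φ) • K.christoffel) +
      weightedForm K.g⁻¹ K.form
        (fun i => φ • K.covDeriv i K.christoffel + (2 * 𝓕.d i φ) • K.christoffel)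
        (fun i => φ • K.covDeriv i K.christoffel + (2 * 𝓕.d i φ) • K.christoffel) +
      K.calabi * (2 * φ * K.laplacian φ - 6 * K.gradSq φ) := by
  rw [laplacian_apply]
  simp only [K.d_dbar_mul_calabi hφ, contract_add, contract_const_mul, contract_sub,
    K.contract_form_covDeriv_curvature_add_eq_zero hK, weightedForm_transpose_apply,
    weightedForm_apply K.g⁻¹ K.form, laplacian_apply, gradSq]
  ring

end KahlerMetric

section SmoothFunctions

/-- The star algebra of smooth complex-valued functions on a complex normed space, smoothness being
over `ℝ`. -/
def smoothFunctions (E : Type*) [NormedAddCommGroup E] [NormedSpace ℂ E] :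
    StarSubalgebra ℂ (E → ℂ) where
  carrier := {f | ContDiff ℝ ∞ f}
  mul_mem' {f h} (hf : ContDiff ℝ ∞ f) (hh : ContDiff ℝ ∞ h) := hf.mul hh
  add_mem' {f h} (hf : ContDiff ℝ ∞ f) (hh : ContDiff ℝ ∞ h) := hf.add hh
  algebraMap_mem' c := show ContDiff ℝ ∞ fun _ : E => c from contDiff_const
  star_mem' {f} (hf : ContDiff ℝ ∞ f) := Complex.conjCLE.contDiff.comp hf

/-- The type of smooth complex-valued functions on `E`. -/
abbrev SmoothFun (E : Type*) [NormedAddCommGroup E] [NormedSpace ℂ E] : Type _ := smoothFunctions E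

variable {E : Type*} [NormedAddCommGroup E] [NormedSpace ℂ E]

namespace SmoothFun

instance : CoeFun (SmoothFun E) fun _ => E → ℂ := ⟨Subtype.val⟩

lemma contDiff (f : SmoothFun E) : ContDiff ℝ ∞ f := f.2

lemma differentiable (f : SmoothFun E) : Differentiable ℝ f := f.contDiff.differentiable (by simp)

lemma contDiff_fderiv (f : SmoothFun E) : ContDiff ℝ ∞ (fderiv ℝ f) :=
  f.contDiff.fderiv_right (by simp)

/-- Evaluation at a point, as a homomorphism. -/
def evalAt (x : E) : SmoothFun E →⋆ₐ[ℂ] ℂ :=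
  (Pi.evalStarAlgHom ℂ (fun _ : E => ℂ) x).comp (smoothFunctions E).subtype

lemma evalAt_apply (x : E) (f : SmoothFun E) : evalAt x f = f x := rfl

lemma isUnit_of_ne_zero {f : SmoothFun E} (hf : ∀ x, f x ≠ 0) : IsUnit f :=
  .of_mul_eq_one ⟨fun x => (f x)⁻¹, f.contDiff.inv hf⟩ <|
    Subtype.ext <| funext fun x => mul_inv_cancel₀ (hf x)

/-- The derivative in the real direction `v`. -/
def dirDeriv (v : E) : Derivation ℂ (SmoothFun E) (SmoothFun E) :=
  Derivation.mk'
    { toFun f := ⟨fun x => fderiv ℝ f x v, f.contDiff_fderiv.clm_apply contDiff_const⟩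
      map_add' f h := Subtype.ext <| funext fun x =>
        DFunLike.congr_fun (fderiv_add (f.differentiable x) (h.differentiable x)) v
      map_smul' c f := Subtype.ext <| funext fun x =>
        DFunLike.congr_fun (fderiv_const_smul (f.differentiable x) c) v }
    fun f h => Subtype.ext <| funext fun x =>
      DFunLike.congr_fun (fderiv_mul (f.differentiable x) (h.differentiable x)) v

lemma dirDeriv_apply (v : E) (f : SmoothFun E) (x : E) : dirDeriv v f x = fderiv ℝ f x v := rfl

lemma dirDeriv_dirDeriv_apply (v w : E) (f : SmoothFun E) (x : E) :
    dirDeriv v (dirDeriv w f) x = fderiv ℝ (fderiv ℝ f) x v w := by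
  change fderiv ℝ (fun y => fderiv ℝ f y w) x v = _
  rw [fderiv_clm_apply (f.contDiff_fderiv.differentiable (by simp) x) (by fun_prop)]
  simp

lemma dirDeriv_comm (v w : E) (f : SmoothFun E) :
    dirDeriv v (dirDeriv w f) = dirDeriv w (dirDeriv v f) := by
  ext x
  rw [dirDeriv_dirDeriv_apply, dirDeriv_dirDeriv_apply]
  exact f.contDiff.contDiffAt.isSymmSndFDerivAt (by simpa using ENat.LEInfty.out) v w

lemma star_dirDeriv (v : E) (f : SmoothFun E) : star (dirDeriv v f) = dirDeriv v (star f) :=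
  Subtype.ext <| funext fun x =>
    (DFunLike.congr_fun (fderiv_star (𝕜 := ℝ) (f := (f : E → ℂ)) (x := x)) v).symm

lemma dirDeriv_add (v w : E) : dirDeriv (v + w) = dirDeriv v + dirDeriv w := by
  ext f x
  exact map_add (fderiv ℝ f x) v w

lemma dirDeriv_smul (r : ℝ) (v : E) : dirDeriv (r • v) = (r : ℂ) • dirDeriv v := by
  ext f x
  exact map_smul (fderiv ℝ f x) r v

/-- The derivative `∂_v` in the `(1,0)`-direction of `v`. -/
def del (v : E) : Derivation ℂ (SmoothFun E) (SmoothFun E) :=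
  (2⁻¹ : ℂ) • (dirDeriv v - Complex.I • dirDeriv (Complex.I • v))

/-- The derivative `∂̄_v` in the `(0,1)`-direction of `v`. -/
def delbar (v : E) : Derivation ℂ (SmoothFun E) (SmoothFun E) :=
  (2⁻¹ : ℂ) • (dirDeriv v + Complex.I • dirDeriv (Complex.I • v))

lemma del_apply (v : E) (f : SmoothFun E) :
    del v f = (2⁻¹ : ℂ) • (dirDeriv v f - Complex.I • dirDeriv (Complex.I • v) f) := rfl

lemma delbar_apply (v : E) (f : SmoothFun E) :
    delbar v f = (2⁻¹ : ℂ) • (dirDeriv v f + Complex.I • dirDeriv (Complex.I • v) f) := rfl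

lemma star_del (v : E) (f : SmoothFun E) : star (del v f) = delbar v (star f) := by
  simp only [del_apply, delbar_apply, star_smul, star_sub, star_dirDeriv, star_inv₀, star_ofNat,
    RCLike.star_def, Complex.conj_I, neg_smul, sub_neg_eq_add]

lemma del_comm (v w : E) (f : SmoothFun E) : del v (del w f) = del w (del v f) := by
  simp only [del_apply, Derivation.map_smul, Derivation.map_sub, dirDeriv_comm v,
    dirDeriv_comm (Complex.I • v)]
  module

lemma delbar_del_comm (v w : E) (f : SmoothFun E) : delbar v (del w f) = del w (delbar v f) := by
  simp only [del_apply, delbar_apply, Derivation.map_smul, Derivation.map_sub, Derivation.map_add,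
    dirDeriv_comm v, dirDeriv_comm (Complex.I • v)]
  module

lemma del_add (v w : E) : del (v + w) = del v + del w := by
  simp only [del, smul_add, dirDeriv_add]
  module

lemma del_I_smul (v : E) : del (Complex.I • v) = Complex.I • del v := by
  ext f x
  change 2⁻¹ * (fderiv ℝ f x (Complex.I • v) -
      Complex.I * fderiv ℝ f x (Complex.I • Complex.I • v)) =
    Complex.I * (2⁻¹ * (fderiv ℝ f x v - Complex.I * fderiv ℝ f x (Complex.I • v)))
  rw [smul_smul, Complex.I_mul_I, neg_one_smul, map_neg]
  linear_combination 2⁻¹ * fderiv ℝ f x (Complex.I • v) * Complex.I_sq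

lemma del_smul (c : ℂ) (v : E) : del (c • v) = c • del v := by
  have hreal (r : ℝ) (w : E) : del ((r : ℂ) • w) = (r : ℂ) • del w := by
    rw [del, del, smul_comm, Complex.coe_smul, Complex.coe_smul, dirDeriv_smul, dirDeriv_smul]
    module
  rw [← Complex.re_add_im c, add_smul, mul_smul, del_add, hreal, hreal, del_I_smul, add_smul,
    mul_smul]

lemma delbar_eq_star_del (v : E) (f : SmoothFun E) : delbar v f = star (del v (star f)) := by
  rw [star_del, star_star]

/-- The Levi form `(v, w) ↦ ∂_v ∂̄_w f` of `f` at `x`. -/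
def leviForm (f : SmoothFun E) (x : E) : E →ₗ[ℂ] E →ₛₗ[starRingEnd ℂ] ℂ :=
  LinearMap.mk₂'ₛₗ (RingHom.id ℂ) (starRingEnd ℂ) (fun v w => evalAt x (del v (delbar w f)))
    (fun v v' w => by rw [del_add]; exact map_add (evalAt x) _ _)
    (fun c v w => by rw [del_smul]; exact map_smul (evalAt x) c _)
    (fun v w w' => by
      simp only [delbar_eq_star_del, del_add, Derivation.add_apply, star_add, map_add])
    (fun c v w => by
      simp only [delbar_eq_star_del, del_smul, Derivation.smul_apply, star_smul,
        Derivation.map_smul, map_smul]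
      rfl)

lemma leviForm_apply (f : SmoothFun E) (x v w : E) :
    leviForm f x v w = evalAt x (del v (delbar w f)) := rfl

lemma leviForm_self (f : SmoothFun E) (x v : E) :
    leviForm f x v v = 4⁻¹ * (dirDeriv v (dirDeriv v f) x +
      dirDeriv (Complex.I • v) (dirDeriv (Complex.I • v) f) x) := by
  have hdelbar (u : E) : dirDeriv u (delbar v f) =
      (2⁻¹ : ℂ) • (dirDeriv u (dirDeriv v f) +
        Complex.I • dirDeriv u (dirDeriv (Complex.I • v) f)) := by
    simp only [delbar_apply, Derivation.map_smul, Derivation.map_add]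
  rw [leviForm_apply, del_apply, hdelbar, hdelbar, dirDeriv_comm (Complex.I • v) v]
  simp only [map_smul, map_sub, map_add, evalAt_apply, smul_eq_mul]
  linear_combination -4⁻¹ * dirDeriv (Complex.I • v) (dirDeriv (Complex.I • v) f) x * Complex.I_sq

end SmoothFun

end SmoothFunctions

namespace SmoothFun

section InnerProductSpace

variable {F : Type*} [NormedAddCommGroup F] [InnerProductSpace ℂ F]

/-- The squared distance to `p`. -/
def distSq (p : F) : SmoothFun F :=
  ⟨fun x => inner ℂ (x - p) (x - p),
    have h : ContDiff ℝ ∞ fun x : F => x - p := contDiff_id.sub contDiff_const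
    h.inner ℂ h⟩

lemma distSq_apply (p x : F) : distSq p x = (‖x - p‖ : ℂ) ^ 2 := inner_self_eq_norm_sq_to_K _

lemma star_distSq (p : F) : star (distSq p) = distSq p :=
  Subtype.ext <| funext fun _ => inner_conj_symm _ _

lemma dirDeriv_distSq_apply (v p x : F) :
    dirDeriv v (distSq p) x = inner ℂ (x - p) v + inner ℂ v (x - p) := by
  have h : DifferentiableAt ℝ (fun y => y - p) x := by fun_prop
  refine (fderiv_inner_apply ℂ h h v).trans ?_
  rw [fderiv_sub_const, fderiv_fun_id]
  rfl

lemma del_distSq_apply (v p x : F) : del v (distSq p) x = inner ℂ (x - p) v := by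
  have h : del v (distSq p) x = 2⁻¹ * (dirDeriv v (distSq p) x -
    Complex.I * dirDeriv (Complex.I • v) (distSq p) x) := rfl
  rw [h, dirDeriv_distSq_apply, dirDeriv_distSq_apply, inner_smul_right, inner_smul_left,
    Complex.conj_I]
  ring_nf
  rw [Complex.I_sq]
  ring

lemma delbar_distSq_apply (v p x : F) : delbar v (distSq p) x = inner ℂ v (x - p) := by
  rw [← star_distSq, ← star_del, ← inner_conj_symm, ← del_distSq_apply]
  rfl

lemma leviForm_distSq (p x v w : F) : leviForm (distSq p) x v w = inner ℂ w v := by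
  have hderiv (u : F) : dirDeriv u (delbar w (distSq p)) x = inner ℂ w u := by
    have h : HasFDerivAt (delbar w (distSq p) : F → ℂ) ((innerSL ℂ w).restrictScalars ℝ) x := by
      rw [show (delbar w (distSq p) : F → ℂ) = _ from funext (delbar_distSq_apply w p)]
      exact ((innerSL ℂ w).restrictScalars ℝ).hasFDerivAt.comp x ((hasFDerivAt_id x).sub_const p)
    rw [dirDeriv_apply, h.fderiv]
    rfl
  have h : leviForm (distSq p) x v w = 2⁻¹ * (dirDeriv v (delbar w (distSq p)) x -
    Complex.I * dirDeriv (Complex.I • v) (delbar w (distSq p)) x) := rfl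
  rw [h, hderiv, hderiv, inner_smul_right, ← mul_assoc, Complex.I_mul_I]
  ring

end InnerProductSpace

end SmoothFun

/-- The frame of Wirtinger derivatives. -/
def wirtinger (N : ℕ) : ComplexFrame ℂ (SmoothFun (Cn N)) (Fin N) where
  d i := SmoothFun.del (coordDir N i)
  dbar i := SmoothFun.delbar (coordDir N i)
  star_d _ := SmoothFun.star_del _
  d_comm _ _ := SmoothFun.del_comm _ _
  dbar_d_comm _ _ := SmoothFun.delbar_del_comm _ _

section Jacobi

variable {n : Type*} [Fintype n] [DecidableEq n]

lemma trace_adjugate_mul {R : Type*} [CommRing R] (M P : Matrix n n R) :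
    (M.adjugate * P).trace = ∑ σ : Equiv.Perm n, Equiv.Perm.sign σ •
      ∑ i, (∏ j ∈ Finset.univ.erase i, M (σ j) j) * P (σ i) i := by
  have hdiag (i : n) : (M.adjugate * P) i i = (M.updateCol i (P.col i)).det := by
    rw [← Matrix.cramer_apply, Matrix.cramer_eq_adjugate_mulVec]
    rfl
  simp only [Matrix.trace, Matrix.diag_apply, hdiag, Matrix.det_apply, Finset.smul_sum]
  rw [Finset.sum_comm]
  refine Finset.sum_congr rfl fun σ _ => Finset.sum_congr rfl fun i _ => ?_
  rw [← Finset.prod_erase_mul Finset.univ _ (Finset.mem_univ i), Matrix.updateCol_self]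
  congr 2
  exact Finset.prod_congr rfl fun j hj => Matrix.updateCol_ne (Finset.ne_of_mem_erase hj)

lemma derivation_prod {R A ι : Type*} [CommRing R] [CommRing A] [Algebra R A] [DecidableEq ι]
    (δ : Derivation R A A) (s : Finset ι) (f : ι → A) :
    δ (∏ i ∈ s, f i) = ∑ i ∈ s, (∏ j ∈ s.erase i, f j) * δ (f i) := by
  induction s using Finset.induction_on with
  | empty => simp
  | insert a s ha ih =>
    have herase : ∀ i ∈ s, ∏ j ∈ (insert a s).erase i, f j = f a * ∏ j ∈ s.erase i, f j :=
      fun i hi => by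
        rw [Finset.erase_insert_of_ne (ne_of_mem_of_not_mem hi ha).symm,
          Finset.prod_insert fun h => ha (Finset.mem_of_mem_erase h)]
    rw [Finset.prod_insert ha, δ.leibniz, ih, Finset.sum_insert ha, Finset.erase_insert ha,
      add_comm, smul_eq_mul, smul_eq_mul, Finset.mul_sum]
    exact congrArg _ (Finset.sum_congr rfl fun i hi => by rw [herase i hi, mul_assoc])

lemma derivation_det {R A : Type*} [CommRing R] [CommRing A] [Algebra R A] (δ : Derivation R A A)
    (M : Matrix n n A) : δ M.det = (M.adjugate * matrixDeriv δ M).trace := by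
  simp only [trace_adjugate_mul, Matrix.det_apply, map_sum, Units.smul_def, map_zsmul,
    derivation_prod, matrixDeriv_apply]

lemma hasDerivAt_det {M : ℝ → Matrix n n ℂ} {M' : Matrix n n ℂ} {t : ℝ}
    (hM : ∀ i j, HasDerivAt (fun s => M s i j) (M' i j) t) :
    HasDerivAt (fun s => (M s).det) ((M t).adjugate * M').trace t := by
  simp only [trace_adjugate_mul, Matrix.det_apply]
  refine HasDerivAt.fun_sum fun σ _ => ?_
  exact (HasDerivAt.fun_finsetProd fun i _ => hM (σ i) i).const_smul (Equiv.Perm.sign σ)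

end Jacobi

namespace SmoothFun

variable {E : Type*} [NormedAddCommGroup E] [NormedSpace ℂ E]

/-- The principal logarithm of a function that avoids its branch cut. -/
def log (f : SmoothFun E) (hf : ∀ x, f x ∈ Complex.slitPlane) : SmoothFun E :=
  ⟨fun x => Complex.log (f x), contDiff_iff_contDiffAt.2 fun x =>
    ((Complex.contDiffAt_log (hf x)).restrict_scalars ℝ).comp x f.contDiff.contDiffAt⟩

lemma dirDeriv_log_mul {f : SmoothFun E} (hf : ∀ x, f x ∈ Complex.slitPlane) (v : E) :
    dirDeriv v (f.log hf) * f = dirDeriv v f := by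
  ext x
  have h := ((Complex.hasDerivAt_log (hf x)).hasFDerivAt.restrictScalars ℝ).comp x
    (f.differentiable x).hasFDerivAt
  change fderiv ℝ (Complex.log ∘ f) x v * f x = fderiv ℝ f x v
  rw [h.fderiv]
  simp [Complex.slitPlane_ne_zero (hf x)]

lemma del_log_mul {f : SmoothFun E} (hf : ∀ x, f x ∈ Complex.slitPlane) (v : E) :
    del v (f.log hf) * f = del v f := by
  rw [del_apply, smul_mul_assoc, sub_mul, smul_mul_assoc, dirDeriv_log_mul, dirDeriv_log_mul,
    ← del_apply]

end SmoothFun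

namespace KahlerMetric

variable {N : ℕ} (K : KahlerMetric (wirtinger N))

/-- The value of the metric at a point. -/
def metricAt (x : Cn N) : Matrix (Fin N) (Fin N) ℂ := K.g.map (SmoothFun.evalAt x)

lemma map_inv_evalAt (x : Cn N) : K.g⁻¹.map (SmoothFun.evalAt x) = (K.metricAt x)⁻¹ := by
  refine (Matrix.inv_eq_right_inv ?_).symm
  rw [metricAt, ← Matrix.map_mul, K.mul_inv, Matrix.map_one _ (map_zero _) (map_one _)]

lemma det_metricAt (x : Cn N) : (K.metricAt x).det = K.g.det x :=
  (RingHom.map_det (SmoothFun.evalAt x : SmoothFun (Cn N) →+* ℂ) K.g).symm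

lemma trace_metricAt (x : Cn N) : (K.metricAt x).trace = K.g.trace x :=
  (AddMonoidHom.map_trace (SmoothFun.evalAt x) K.g).symm

/-- The metric with a given field of positive definite coefficient matrices. -/
def ofMatrixField {g : Cn N → Matrix (Fin N) (Fin N) ℂ} (hg : IsKahlerMatrixField g)
    (hpos : ∀ x, (g x).PosDef) : KahlerMetric (wirtinger N) where
  g := Matrix.of fun i j => ⟨fun x => g x i j, hg.1 i j⟩
  isHermitian := Matrix.ext fun i j => Subtype.ext <| funext fun x => (hg.2.1 x).apply i j
  isUnit_det := SmoothFun.isUnit_of_ne_zero fun x hdet => (hpos x).det_pos.ne'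
    ((RingHom.map_det (SmoothFun.evalAt x : SmoothFun (Cn N) →+* ℂ) _).symm.trans hdet)
  d_apply_comm i j k := Subtype.ext <| funext fun x => hg.2.2 x i j k

variable {K}

lemma det_mem_slitPlane (hpos : ∀ x, (K.metricAt x).PosDef) (x : Cn N) :
    K.g.det x ∈ Complex.slitPlane := by
  rw [← det_metricAt]
  exact .inl (Complex.pos_iff.1 (hpos x).det_pos).1

lemma trace_christoffel (hpos : ∀ x, (K.metricAt x).PosDef) (i : Fin N) :
    (K.christoffel i).trace = (wirtinger N).d i (K.g.det.log (det_mem_slitPlane hpos)) := by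
  refine K.isUnit_det.mul_left_injective ?_
  have hlog : (wirtinger N).d i (K.g.det.log (det_mem_slitPlane hpos)) * K.g.det =
      (wirtinger N).d i K.g.det := SmoothFun.del_log_mul _ _
  simp only [hlog]
  rw [derivation_det, matrixDeriv_d, Matrix.trace_mul_comm, Matrix.mul_assoc, Matrix.mul_adjugate,
    Matrix.mul_smul, Matrix.mul_one, Matrix.trace_smul, smul_eq_mul, mul_comm]

lemma ricMat_metricAt_apply (hpos : ∀ x, (K.metricAt x).PosDef) (x : Cn N) (i j : Fin N) :
    ricMat K.metricAt x i j = -(K.curvature j i).trace x := by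
  rw [curvature, trace_matrixDeriv, trace_christoffel hpos, (wirtinger N).dbar_d_comm, ricMat,
    Matrix.of_apply]
  simp only [det_metricAt]
  rfl

lemma isRicciFlat_of_ricMat_eq_zero (hpos : ∀ x, (K.metricAt x).PosDef)
    (hric : ∀ x, ricMat K.metricAt x = 0) : K.IsRicciFlat := fun j i => by
  ext x
  simpa [hric] using (ricMat_metricAt_apply hpos x i j).symm

end KahlerMetric

section MaximumPrinciple

lemma deriv_deriv_nonpos_of_isLocalMax {u : ℝ → ℝ} {a : ℝ} (hmax : IsLocalMax u a)
    (hu : ContinuousAt u a) : deriv (deriv u) a ≤ 0 := by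
  by_contra! hpos
  have hmin : IsLocalMin u a := isLocalMin_of_deriv_deriv_pos hpos hmax.deriv_eq_zero hu
  have hconst : u =ᶠ[nhds a] fun _ => u a := hmax.and hmin |>.mono fun _ h => le_antisymm h.1 h.2
  simp [hconst.deriv.deriv_eq] at hpos

namespace SmoothFun

variable {E : Type*} [NormedAddCommGroup E] [NormedSpace ℂ E]

lemma hasDerivAt_re_line (f : SmoothFun E) (x v : E) (s : ℝ) :
    HasDerivAt (fun s : ℝ => (f (x + s • v)).re) (dirDeriv v f (x + s • v)).re s := by
  have hline : HasDerivAt (fun s : ℝ => x + s • v) v s := by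
    simpa using ((hasDerivAt_id s).smul_const v).const_add x
  exact Complex.reCLM.hasFDerivAt.comp_hasDerivAt s
    ((f.differentiable (x + s • v)).hasFDerivAt.comp_hasDerivAt s hline)

variable {f : SmoothFun E} {x : E}

lemma re_dirDeriv_dirDeriv_nonpos (hmax : IsLocalMax (fun y => (f y).re) x) (v : E) :
    (dirDeriv v (dirDeriv v f) x).re ≤ 0 := by
  have hmax_line : IsLocalMax (fun s : ℝ => (f (x + s • v)).re) 0 := by
    have hline : Filter.Tendsto (fun s : ℝ => x + s • v) (nhds 0) (nhds (x + (0 : ℝ) • v)) :=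
      Continuous.tendsto (by fun_prop) 0
    rw [zero_smul, add_zero] at hline
    simpa [IsLocalMax, IsMaxFilter] using hline.eventually hmax
  have hderiv (h : SmoothFun E) : deriv (fun s : ℝ => (h (x + s • v)).re) =
      fun s => (dirDeriv v h (x + s • v)).re := funext fun s => (h.hasDerivAt_re_line x v s).deriv
  have hsecond :=
    deriv_deriv_nonpos_of_isLocalMax hmax_line (f.hasDerivAt_re_line x v 0).continuousAt
  rw [hderiv, hderiv] at hsecond
  simpa using hsecond

lemma re_leviForm_self_nonpos (hmax : IsLocalMax (fun y => (f y).re) x) (v : E) :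
    (leviForm f x v v).re ≤ 0 := by
  have hv := re_dirDeriv_dirDeriv_nonpos hmax v
  have hIv := re_dirDeriv_dirDeriv_nonpos hmax (Complex.I • v)
  have hre : (leviForm f x v v).re = 4⁻¹ * ((dirDeriv v (dirDeriv v f) x).re +
      (dirDeriv (Complex.I • v) (dirDeriv (Complex.I • v) f) x).re) := by
    rw [leviForm_self]
    norm_num
  linarith

end SmoothFun

namespace KahlerMetric

variable {N : ℕ} {K : KahlerMetric (wirtinger N)} {x : Cn N}

lemma laplacian_eq_weightedForm (f : SmoothFun (Cn N)) :
    K.laplacian f x =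
      weightedForm (K.metricAt x)⁻¹ (SmoothFun.leviForm f x) (coordDir N) (coordDir N) := by
  rw [← SmoothFun.evalAt_apply, laplacian_apply, ringHom_contract, map_inv_evalAt]
  rfl

lemma re_laplacian_nonpos_of_isLocalMax (hpos : (K.metricAt x).PosSemidef) {f : SmoothFun (Cn N)}
    (hmax : IsLocalMax (fun y => (f y).re) x) : (K.laplacian f x).re ≤ 0 := by
  obtain ⟨B, hB⟩ := exists_eq_conjTranspose_mul_self hpos.inv
  rw [laplacian_eq_weightedForm, hB, weightedForm_conjTranspose_mul_self, Complex.re_sum]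
  exact Finset.sum_nonpos fun p _ => SmoothFun.re_leviForm_self_nonpos hmax _

end KahlerMetric

end MaximumPrinciple

section Pinching

variable {n : Type*} {M : Matrix n n ℂ} {C : ℝ}

lemma posDef_of_smul_one_le [DecidableEq n] (hC : 0 < C) (h : C • 1 ≤ M) : M.PosDef := by
  simpa using (Matrix.PosDef.one.smul hC).add_posSemidef (Matrix.le_iff.1 h)

variable [Fintype n]

lemma posSemidef_of_re_dotProduct_nonneg (hM : M.IsHermitian)
    (h : ∀ v : n → ℂ, 0 ≤ (star v ⬝ᵥ M *ᵥ v).re) : M.PosSemidef :=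
  .of_dotProduct_mulVec_nonneg hM fun v =>
    Complex.nonneg_iff.2 ⟨h v, (hM.im_star_dotProduct_mulVec_self v).symm⟩

lemma re_dotProduct_mulVec_eq_sum (v : n → ℂ) :
    (star v ⬝ᵥ M *ᵥ v).re = (∑ i, ∑ j, starRingEnd ℂ (v i) * M i j * v j).re := by
  simp only [dotProduct, Matrix.mulVec, Finset.mul_sum, mul_assoc]
  rfl

variable [DecidableEq n]

lemma re_dotProduct_smul_one_mulVec (C : ℝ) (v : n → ℂ) :
    (star v ⬝ᵥ (C • (1 : Matrix n n ℂ)) *ᵥ v).re = C * ∑ i, Complex.normSq (v i) := by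
  rw [Matrix.smul_mulVec, Matrix.one_mulVec, dotProduct_smul, Complex.smul_re, smul_eq_mul,
    dotProduct, Complex.re_sum]
  simp [Complex.normSq_apply]

lemma mem_Icc_smul_one (hM : M.IsHermitian)
    (h : ∀ v : n → ℂ, C⁻¹ * (∑ i, Complex.normSq (v i)) ≤
        (∑ i, ∑ j, starRingEnd ℂ (v i) * M i j * v j).re ∧
      (∑ i, ∑ j, starRingEnd ℂ (v i) * M i j * v j).re ≤ C * (∑ i, Complex.normSq (v i))) :
    M ∈ Set.Icc (C⁻¹ • 1) (C • 1) := by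
  have hone (c : ℝ) : (c • (1 : Matrix n n ℂ)).IsHermitian := by
    simp [Matrix.IsHermitian, Matrix.conjTranspose_smul]
  constructor
  · refine Matrix.le_iff.2 (posSemidef_of_re_dotProduct_nonneg (hM.sub (hone _)) fun v => ?_)
    rw [Matrix.sub_mulVec, dotProduct_sub, Complex.sub_re, re_dotProduct_mulVec_eq_sum,
      re_dotProduct_smul_one_mulVec]
    exact sub_nonneg.2 (h v).1
  · refine Matrix.le_iff.2 (posSemidef_of_re_dotProduct_nonneg ((hone _).sub hM) fun v => ?_)
    rw [Matrix.sub_mulVec, dotProduct_sub, Complex.sub_re, re_dotProduct_smul_one_mulVec,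
      re_dotProduct_mulVec_eq_sum]
    exact sub_nonneg.2 (h v).2

open scoped Matrix.Norms.L2Operator in
lemma inv_le_smul_one (hC : 0 < C) (h : C⁻¹ • 1 ≤ M) : M⁻¹ ≤ C • 1 := by
  have hinv : Ring.inverse (C⁻¹ • (1 : Matrix n n ℂ)) = C • 1 := by
    rw [← Matrix.nonsing_inv_eq_ringInverse]
    exact Matrix.inv_eq_right_inv (by simp [smul_smul, hC.ne'])
  rw [Matrix.nonsing_inv_eq_ringInverse, ← hinv]
  exact CStarAlgebra.antitoneOn_ringInverse
    (Matrix.isStrictlyPositive_iff_posDef.2 (Matrix.PosDef.one.smul (inv_pos.2 hC)))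
    (Matrix.isStrictlyPositive_iff_posDef.2 (posDef_of_smul_one_le (inv_pos.2 hC) h)) h

lemma trace_le_of_le_smul_one (h : M ≤ C • 1) : M.trace ≤ C * Fintype.card n := by
  simpa [Matrix.trace_sub, Matrix.trace_smul] using (Matrix.le_iff.1 h).trace_nonneg

end Pinching

section CalabiEstimates

namespace KahlerMetric

variable {N : ℕ} {K : KahlerMetric (wirtinger N)} {C : ℝ} {x : Cn N}

lemma weightedForm_traceForm_apply (P : Matrix (Fin N) (Fin N) (SmoothFun (Cn N))) (x : Cn N)
    (X Y : Fin N → Matrix (Fin N) (Fin N) (SmoothFun (Cn N))) :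
    weightedForm K.g⁻¹ (traceForm K.g P) X Y x =
      weightedForm (K.metricAt x)⁻¹ (traceForm (K.metricAt x) (P.map (SmoothFun.evalAt x)))
        (fun k => (X k).map (SmoothFun.evalAt x)) (fun k => (Y k).map (SmoothFun.evalAt x)) := by
  rw [← SmoothFun.evalAt_apply, map_weightedForm (SmoothFun.evalAt x)
    (fun M => M.map (SmoothFun.evalAt x)) K.g⁻¹ (map_traceForm (SmoothFun.evalAt x) K.g P),
    map_inv_evalAt, metricAt]

lemma weightedForm_form_self_nonneg (hpos : (K.metricAt x).PosSemidef)
    {H : Matrix (Fin N) (Fin N) (SmoothFun (Cn N))} (hH : (H.map (SmoothFun.evalAt x)).PosSemidef)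
    (X : Fin N → Fin N → Matrix (Fin N) (Fin N) (SmoothFun (Cn N))) :
    0 ≤ weightedForm H K.form X X x := by
  have hform := map_weightedForm (SmoothFun.evalAt x)
    (fun Y k => (Y k).map (SmoothFun.evalAt x)) H (K.weightedForm_traceForm_apply K.g⁻¹ x) X X
  rw [← SmoothFun.evalAt_apply, hform, map_inv_evalAt]
  exact weightedForm_self_nonneg hH
    (weightedForm_self_nonneg hpos.inv (traceForm_self_nonneg hpos hpos.inv)) _

lemma mul_le_laplacian_mul_calabi (hK : K.IsRicciFlat) (hpos : (K.metricAt x).PosSemidef)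
    {φ : SmoothFun (Cn N)} (hφ : star φ = φ) :
    K.calabi x * (2 * φ x * K.laplacian φ x - 6 * K.gradSq φ x) ≤
      K.laplacian (φ * φ * K.calabi) x := by
  have hinv : (K.g⁻¹.map (SmoothFun.evalAt x)).PosSemidef := by
    rw [map_inv_evalAt]
    exact hpos.inv
  rw [K.laplacian_mul_calabi hK hφ]
  exact le_add_of_nonneg_left <| add_nonneg
    (weightedForm_form_self_nonneg hpos (H := K.g⁻¹ᵀ) hinv.transpose _)
    (weightedForm_form_self_nonneg hpos hinv _)

lemma calabi_nonneg (hpos : (K.metricAt x).PosSemidef) : 0 ≤ K.calabi x := by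
  rw [calabi, weightedForm_traceForm_apply, map_inv_evalAt]
  exact weightedForm_self_nonneg hpos.inv (traceForm_self_nonneg hpos hpos.inv) _

lemma calabi_le_laplacian_trace (hK : K.IsRicciFlat) (hC : 0 < C)
    (hlower : C⁻¹ • 1 ≤ K.metricAt x) : K.calabi x ≤ C * K.laplacian K.g.trace x := by
  have hpos := (posDef_of_smul_one_le (inv_pos.2 hC) hlower).posSemidef
  have hinv := Matrix.le_iff.1 (inv_le_smul_one hC hlower)
  have hdiff := weightedForm_self_nonneg hpos.inv (traceForm_self_nonneg hpos hinv)
    fun k => (K.christoffel k).map (SmoothFun.evalAt x)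
  rw [K.laplacian_trace hK, calabi, weightedForm_traceForm_apply, weightedForm_traceForm_apply,
    map_inv_evalAt, Matrix.map_one _ (map_zero _) (map_one _)]
  simpa [weightedForm_apply, contract_apply, traceForm_apply, Matrix.mul_sub, mul_sub,
    Finset.mul_sum, mul_left_comm] using hdiff

lemma christoffel_eq_zero (hpos : ∀ x, (K.metricAt x).PosDef) (hS : ∀ x, K.calabi x = 0)
    (k : Fin N) : K.christoffel k = 0 := by
  ext i j x
  have hx := hS x
  rw [calabi, weightedForm_traceForm_apply, map_inv_evalAt] at hx
  have hΓ := eq_zero_of_weightedForm_self_eq_zero (hpos x).inv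
    (traceForm_self_nonneg (hpos x).posSemidef (hpos x).inv.posSemidef)
    (fun M => eq_zero_of_traceForm_self_eq_zero (hpos x) (hpos x).inv) hx
  exact congrFun₂ (congrFun hΓ k) i j

end KahlerMetric

namespace SmoothFun

variable {N : ℕ} {f : SmoothFun (Cn N)}

lemma del_eq_zero_of_coordDir (hf : ∀ i, del (coordDir N i) f = 0) (v : Cn N) : del v f = 0 := by
  let L : Cn N →ₗ[ℂ] SmoothFun (Cn N) :=
    { toFun v := del v f
      map_add' v w := by rw [del_add]; rfl
      map_smul' c v := by rw [del_smul]; rfl }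
  have hL : L = 0 := (EuclideanSpace.basisFun (Fin N) ℂ).toBasis.ext fun i => by
    simpa [L, coordDir] using hf i
  exact LinearMap.congr_fun hL v

lemma apply_eq_apply_of_wirtinger_eq_zero (hd : ∀ i, (wirtinger N).d i f = 0)
    (hdbar : ∀ i, (wirtinger N).dbar i f = 0) (x y : Cn N) : f x = f y := by
  have hdel := del_eq_zero_of_coordDir hd
  have hdelbar (v : Cn N) : delbar v f = 0 := by
    rw [delbar_eq_star_del, del_eq_zero_of_coordDir fun i => ?_, star_zero]
    rw [← star_star (del _ _), ← delbar_eq_star_del]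
    exact (congrArg star (hdbar i)).trans (star_zero _)
  have hdir (v : Cn N) : dirDeriv v f = del v f + delbar v f := by
    rw [del_apply, delbar_apply]
    module
  refine is_const_of_fderiv_eq_zero f.differentiable (fun z => ?_) x y
  ext v
  rw [← dirDeriv_apply, hdir, hdel, hdelbar]
  simp

end SmoothFun

end CalabiEstimates

section Cutoff

lemma norm_sub_sq_div_le_one {E : Type*} [SeminormedAddCommGroup E] {R : ℝ} {p x : E}
    (hx : x ∈ Metric.closedBall p R) : ‖x - p‖ ^ 2 / R ^ 2 ≤ 1 := by
  rw [mem_closedBall_iff_norm] at hx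
  exact div_le_one_of_le₀ (by gcongr) (by positivity)

namespace SmoothFun

variable {F : Type*} [NormedAddCommGroup F] [InnerProductSpace ℂ F] {R : ℝ} {p x : F}

/-- The function `1 - |x - p|² / R²`, positive inside the ball of radius `R` about `p`. -/
def cutoff (p : F) (R : ℝ) : SmoothFun F := 1 - (R ^ 2 : ℂ)⁻¹ • distSq p

lemma star_cutoff (p : F) (R : ℝ) : star (cutoff p R) = cutoff p R := by
  simp [cutoff, star_smul, star_distSq]

lemma cutoff_apply (p : F) (R : ℝ) (x : F) :
    cutoff p R x = ((1 - ‖x - p‖ ^ 2 / R ^ 2 : ℝ) : ℂ) := by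
  change 1 - (R ^ 2 : ℂ)⁻¹ * distSq p x = _
  rw [distSq_apply]
  push_cast
  ring

lemma cutoff_self (p : F) (R : ℝ) : cutoff p R p = 1 := by simp [cutoff_apply]

lemma cutoff_eq_zero (hR : R ≠ 0) (hx : x ∈ Metric.sphere p R) : cutoff p R x = 0 := by
  rw [mem_sphere_iff_norm] at hx
  simp [cutoff_apply, hx, hR]

lemma cutoff_mem_Icc (hx : x ∈ Metric.closedBall p R) :
    cutoff p R x ∈ Set.Icc 0 1 := by
  have hle := norm_sub_sq_div_le_one hx
  have hnonneg : 0 ≤ ‖x - p‖ ^ 2 / R ^ 2 := by positivity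
  rw [cutoff_apply]
  exact ⟨by exact_mod_cast sub_nonneg.2 hle, by exact_mod_cast sub_le_self 1 hnonneg⟩

end SmoothFun

namespace KahlerMetric

open SmoothFun

variable {N : ℕ} {K : KahlerMetric (wirtinger N)} {C R : ℝ} {p x : Cn N}

lemma laplacian_distSq (p x : Cn N) : K.laplacian (distSq p) x = (K.metricAt x)⁻¹.trace := by
  rw [laplacian_eq_weightedForm, weightedForm_apply, contract_apply]
  simp [leviForm_distSq, coordDir, EuclideanSpace.inner_single_left, Matrix.trace]

lemma laplacian_cutoff (p : Cn N) (R : ℝ) (x : Cn N) :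
    K.laplacian (cutoff p R) x = -((R ^ 2 : ℂ)⁻¹ * (K.metricAt x)⁻¹.trace) := by
  have hone : K.laplacian 1 = 0 := by simp [laplacian_apply, contract_apply]
  rw [cutoff, map_sub, map_smul, hone, zero_sub, ← laplacian_distSq p]
  rfl

lemma gradSq_distSq (p x : Cn N) :
    K.gradSq (distSq p) x = star (star (x - p).ofLp) ⬝ᵥ (K.metricAt x)⁻¹ *ᵥ star (x - p).ofLp := by
  have hd (i : Fin N) : evalAt x ((wirtinger N).d i (distSq p)) = star ((x - p) i) := by
    refine (del_distSq_apply _ p x).trans ?_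
    simp [coordDir, EuclideanSpace.inner_single_right]
  have hdbar (i : Fin N) : evalAt x ((wirtinger N).dbar i (distSq p)) = (x - p) i := by
    refine (delbar_distSq_apply _ p x).trans ?_
    simp [coordDir, EuclideanSpace.inner_single_left]
  rw [← evalAt_apply, gradSq, ringHom_contract, map_inv_evalAt, contract_apply, Finset.sum_comm]
  simp only [map_mul, hd, hdbar, dotProduct, Matrix.mulVec, star_star, Finset.mul_sum, smul_eq_mul,
    Pi.star_apply]
  exact Finset.sum_congr rfl fun i _ => Finset.sum_congr rfl fun j _ => by ring

lemma gradSq_cutoff (p : Cn N) (R : ℝ) (x : Cn N) :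
    K.gradSq (cutoff p R) x = ((R ^ 2 : ℂ)⁻¹) ^ 2 * K.gradSq (distSq p) x := by
  have hderiv (δ : Derivation ℂ (SmoothFun (Cn N)) (SmoothFun (Cn N))) :
      evalAt x (δ (cutoff p R)) = -((R ^ 2 : ℂ)⁻¹ * evalAt x (δ (distSq p))) := by
    rw [cutoff, Derivation.map_sub, Derivation.map_one_eq_zero, zero_sub, Derivation.map_smul]
    rfl
  rw [← evalAt_apply, ← evalAt_apply, gradSq, gradSq, ringHom_contract, ringHom_contract,
    ← contract_const_mul]
  simp only [map_mul, hderiv]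
  congr! 3
  ring

lemma gradSq_distSq_le (h : (K.metricAt x)⁻¹ ≤ C • 1) (p : Cn N) :
    K.gradSq (distSq p) x ≤ C * (‖x - p‖ : ℂ) ^ 2 := by
  have hdiff := (Matrix.le_iff.1 h).dotProduct_mulVec_nonneg (star (x - p).ofLp)
  rw [Matrix.sub_mulVec, dotProduct_sub, sub_nonneg, ← gradSq_distSq] at hdiff
  refine hdiff.trans_eq ?_
  rw [Matrix.smul_mulVec, Matrix.one_mulVec, star_star, dotProduct_smul, ← distSq_apply,
    Complex.real_smul]
  rfl

lemma gradSq_cutoff_le (hC : 0 ≤ C) (h : (K.metricAt x)⁻¹ ≤ C • 1)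
    (hx : x ∈ Metric.closedBall p R) : K.gradSq (cutoff p R) x ≤ (R ^ 2 : ℂ)⁻¹ * C := by
  have hcoeff : (0 : ℂ) ≤ ((R ^ 2 : ℂ)⁻¹) ^ 2 := by
    exact_mod_cast (by positivity : 0 ≤ (R ^ 2)⁻¹ ^ 2)
  calc K.gradSq (cutoff p R) x
      = ((R ^ 2 : ℂ)⁻¹) ^ 2 * K.gradSq (distSq p) x := gradSq_cutoff p R x
    _ ≤ ((R ^ 2 : ℂ)⁻¹) ^ 2 * (C * (‖x - p‖ : ℂ) ^ 2) :=
      mul_le_mul_of_nonneg_left (gradSq_distSq_le h p) hcoeff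
    _ = (((R ^ 2)⁻¹ * C * (‖x - p‖ ^ 2 / R ^ 2) : ℝ) : ℂ) := by push_cast; ring
    _ ≤ (((R ^ 2)⁻¹ * C : ℝ) : ℂ) := Complex.real_le_real.2 <|
      mul_le_of_le_one_right (by positivity) (norm_sub_sq_div_le_one hx)
    _ = (R ^ 2 : ℂ)⁻¹ * C := by push_cast; rfl

lemma le_cutoff_laplacian_sub_gradSq (hC : 0 < C) (hlower : C⁻¹ • 1 ≤ K.metricAt x)
    (hx : x ∈ Metric.closedBall p R) :
    -((R ^ 2 : ℂ)⁻¹ * ((2 * N + 6) * C)) ≤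
      2 * cutoff p R x * K.laplacian (cutoff p R) x - 6 * K.gradSq (cutoff p R) x := by
  have hinv := inv_le_smul_one hC hlower
  have htrace_nonneg := (posDef_of_smul_one_le (inv_pos.2 hC) hlower).inv.posSemidef.trace_nonneg
  have hcoeff : (0 : ℂ) ≤ (R ^ 2 : ℂ)⁻¹ := by exact_mod_cast (by positivity : 0 ≤ (R ^ 2)⁻¹)
  have hlaplacian : cutoff p R x * ((R ^ 2 : ℂ)⁻¹ * (K.metricAt x)⁻¹.trace) ≤
      (R ^ 2 : ℂ)⁻¹ * (C * N) :=
    calc cutoff p R x * ((R ^ 2 : ℂ)⁻¹ * (K.metricAt x)⁻¹.trace)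
        ≤ (R ^ 2 : ℂ)⁻¹ * (K.metricAt x)⁻¹.trace :=
          mul_le_of_le_one_left (mul_nonneg hcoeff htrace_nonneg) (cutoff_mem_Icc hx).2
      _ ≤ (R ^ 2 : ℂ)⁻¹ * (C * N) := mul_le_mul_of_nonneg_left
          (by simpa using trace_le_of_le_smul_one hinv) hcoeff
  have hgrad := gradSq_cutoff_le hC.le hinv hx
  have hsum := add_le_add (mul_le_mul_of_nonneg_left hlaplacian zero_le_two)
    (mul_le_mul_of_nonneg_left hgrad (Nat.ofNat_nonneg 6))
  rw [laplacian_cutoff]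
  calc -((R ^ 2 : ℂ)⁻¹ * ((2 * N + 6) * C))
      = -(2 * ((R ^ 2 : ℂ)⁻¹ * (C * N)) + 6 * ((R ^ 2 : ℂ)⁻¹ * C)) := by ring
    _ ≤ -(2 * (cutoff p R x * ((R ^ 2 : ℂ)⁻¹ * (K.metricAt x)⁻¹.trace)) +
          6 * K.gradSq (cutoff p R) x) := neg_le_neg hsum
    _ = _ := by ring

end KahlerMetric

end Cutoff

section StaticLiouville

lemma eq_zero_of_nonneg_of_re_nonpos {z : ℂ} (hz : 0 ≤ z) (hre : z.re ≤ 0) : z = 0 :=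
  Complex.ext (le_antisymm hre (Complex.nonneg_iff.1 hz).1) (Complex.nonneg_iff.1 hz).2.symm

namespace KahlerMetric

open SmoothFun

variable {N : ℕ} {K : KahlerMetric (wirtinger N)} {C R : ℝ} {p x : Cn N}

/-- The function `φ² S + R⁻² ((2N + 6) C² + C) tr g`, where `φ` is the cutoff of radius `R` about
`p` and `S` is Calabi's quantity, to which the maximum principle is applied. The coefficient of
`tr g` is chosen so that `Δ tr g ≥ C⁻¹ S` outweighs the cutoff errors. -/
def barrier (K : KahlerMetric (wirtinger N)) (C R : ℝ) (p : Cn N) : SmoothFun (Cn N) :=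
  cutoff p R * cutoff p R * K.calabi +
    ((R ^ 2 : ℂ)⁻¹ * ((2 * N + 6) * C ^ 2 + C)) • K.g.trace

lemma barrier_apply (C R : ℝ) (p x : Cn N) :
    K.barrier C R p x = cutoff p R x * cutoff p R x * K.calabi x +
      (R ^ 2 : ℂ)⁻¹ * ((2 * N + 6) * C ^ 2 + C) * (K.metricAt x).trace := by
  rw [trace_metricAt]
  rfl

lemma barrier_coeff_nonneg (hC : 0 ≤ C) (R : ℝ) (N : ℕ) :
    (0 : ℂ) ≤ (R ^ 2 : ℂ)⁻¹ * ((2 * N + 6) * C ^ 2 + C) := by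
  exact_mod_cast (by positivity : 0 ≤ (R ^ 2)⁻¹ * ((2 * N + 6) * C ^ 2 + C))

lemma mul_calabi_le_laplacian_barrier (hK : K.IsRicciFlat) (hC : 0 < C)
    (hlower : C⁻¹ • 1 ≤ K.metricAt x) (hx : x ∈ Metric.closedBall p R) :
    (R ^ 2 : ℂ)⁻¹ * K.calabi x ≤ K.laplacian (K.barrier C R p) x := by
  have hpos := (posDef_of_smul_one_le (inv_pos.2 hC) hlower).posSemidef
  have hcutoff := (mul_le_mul_of_nonneg_left (le_cutoff_laplacian_sub_gradSq hC hlower hx)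
    (calabi_nonneg hpos)).trans (mul_le_laplacian_mul_calabi hK hpos (star_cutoff p R))
  have hcoeff : (0 : ℂ) ≤ (R ^ 2 : ℂ)⁻¹ * ((2 * N + 6) * C + 1) := by
    exact_mod_cast (by positivity : 0 ≤ (R ^ 2)⁻¹ * ((2 * N + 6) * C + 1))
  have htrace := mul_le_mul_of_nonneg_left (calabi_le_laplacian_trace hK hC hlower) hcoeff
  have hsplit : K.laplacian (K.barrier C R p) x =
      K.laplacian (cutoff p R * cutoff p R * K.calabi) x +
        (R ^ 2 : ℂ)⁻¹ * ((2 * N + 6) * C ^ 2 + C) * K.laplacian K.g.trace x := by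
    rw [barrier, map_add, map_smul]
    rfl
  rw [hsplit]
  calc (R ^ 2 : ℂ)⁻¹ * K.calabi x
      = K.calabi x * -((R ^ 2 : ℂ)⁻¹ * ((2 * N + 6) * C)) +
          (R ^ 2 : ℂ)⁻¹ * ((2 * N + 6) * C + 1) * K.calabi x := by ring
    _ ≤ _ := add_le_add hcutoff htrace
    _ = _ := by ring

lemma calabi_eq_zero_of_isLocalMax_barrier (hK : K.IsRicciFlat) (hC : 0 < C) (hR : R ≠ 0)
    (hlower : C⁻¹ • 1 ≤ K.metricAt x) (hx : x ∈ Metric.closedBall p R)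
    (hmax : IsLocalMax (fun y => (K.barrier C R p y).re) x) : K.calabi x = 0 := by
  have hpos := (posDef_of_smul_one_le (inv_pos.2 hC) hlower).posSemidef
  have hle := (Complex.le_def.1 (mul_calabi_le_laplacian_barrier hK hC hlower hx)).1.trans
    (re_laplacian_nonpos_of_isLocalMax hpos hmax)
  have hscale : ((R ^ 2 : ℂ)⁻¹ * K.calabi x).re = (R ^ 2)⁻¹ * (K.calabi x).re := by
    rw [← Complex.re_ofReal_mul]
    push_cast
    rfl
  rw [hscale] at hle
  exact eq_zero_of_nonneg_of_re_nonpos (calabi_nonneg hpos)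
    (nonpos_of_mul_nonpos_right hle (by positivity))

lemma exists_barrier_le_mul_trace (hK : K.IsRicciFlat) (hC : 0 < C) (hR : 0 < R)
    (hlower : ∀ x, C⁻¹ • 1 ≤ K.metricAt x) (p : Cn N) :
    ∃ x, (K.barrier C R p p).re ≤
      ((R ^ 2 : ℂ)⁻¹ * ((2 * N + 6) * C ^ 2 + C) * (K.metricAt x).trace).re := by
  have hcont : Continuous fun y => (K.barrier C R p y).re :=
    Complex.continuous_re.comp (K.barrier C R p).contDiff.continuous
  obtain ⟨x, hx, hmax⟩ := (isCompact_closedBall p R).exists_isMaxOn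
    ⟨p, Metric.mem_closedBall_self hR.le⟩ hcont.continuousOn
  have hvanish : cutoff p R x * cutoff p R x * K.calabi x = 0 := by
    rcases (Metric.mem_closedBall.1 hx).eq_or_lt with hsphere | hball
    · rw [cutoff_eq_zero hR.ne' hsphere, zero_mul, zero_mul]
    · rw [calabi_eq_zero_of_isLocalMax_barrier hK hC hR.ne' (hlower x) hx
        (hmax.isLocalMax (Metric.closedBall_mem_nhds_of_mem hball)), mul_zero]
  refine ⟨x, (hmax (Metric.mem_closedBall_self hR.le)).trans_eq ?_⟩
  simp only [barrier_apply, hvanish, zero_add]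

lemma re_calabi_le (hK : K.IsRicciFlat) (hC : 0 < C) (hR : 0 < R)
    (hbound : ∀ x, K.metricAt x ∈ Set.Icc (C⁻¹ • 1) (C • 1)) (p : Cn N) :
    (K.calabi p).re ≤ (R ^ 2)⁻¹ * (((2 * N + 6) * C ^ 2 + C) * (C * N)) := by
  have hcoeff := barrier_coeff_nonneg hC.le R N
  have hpos := (posDef_of_smul_one_le (inv_pos.2 hC) (hbound p).1).posSemidef
  obtain ⟨x, hx⟩ := exists_barrier_le_mul_trace hK hC hR (fun x => (hbound x).1) p
  have hcenter : K.calabi p ≤ K.barrier C R p p := by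
    rw [barrier_apply, cutoff_self, one_mul, one_mul]
    exact le_add_of_nonneg_right (mul_nonneg hcoeff hpos.trace_nonneg)
  have htrace := mul_le_mul_of_nonneg_left (trace_le_of_le_smul_one (hbound x).2) hcoeff
  calc (K.calabi p).re ≤ (K.barrier C R p p).re := (Complex.le_def.1 hcenter).1
    _ ≤ _ := hx
    _ ≤ _ := (Complex.le_def.1 htrace).1
    _ = (((R ^ 2)⁻¹ * (((2 * N + 6) * C ^ 2 + C) * (C * N)) : ℝ) : ℂ).re := by
      rw [Fintype.card_fin]
      push_cast
      ring_nf
    _ = _ := Complex.ofReal_re _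

lemma calabi_eq_zero (hK : K.IsRicciFlat) (hC : 0 < C)
    (hbound : ∀ x, K.metricAt x ∈ Set.Icc (C⁻¹ • 1) (C • 1)) (p : Cn N) : K.calabi p = 0 := by
  have hnonneg := calabi_nonneg (posDef_of_smul_one_le (inv_pos.2 hC) (hbound p).1).posSemidef
  have hlim : Filter.Tendsto
      (fun R : ℝ => (R ^ 2)⁻¹ * (((2 * N + 6) * C ^ 2 + C) * (C * N))) Filter.atTop (nhds 0) := by
    have h := (Filter.tendsto_pow_atTop (α := ℝ) two_ne_zero).inv_tendsto_atTop.mul_const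
      (((2 * N + 6) * C ^ 2 + C) * (C * N))
    rwa [zero_mul] at h
  exact eq_zero_of_nonneg_of_re_nonpos hnonneg <| ge_of_tendsto hlim <|
    (Filter.eventually_gt_atTop 0).mono fun R hR => re_calabi_le hK hC hR hbound p

theorem metricAt_eq_metricAt (hK : K.IsRicciFlat) (hC : 0 < C)
    (hbound : ∀ x, K.metricAt x ∈ Set.Icc (C⁻¹ • 1) (C • 1)) (x y : Cn N) :
    K.metricAt x = K.metricAt y := by
  have hchristoffel := christoffel_eq_zero
    (fun x => posDef_of_smul_one_le (inv_pos.2 hC) (hbound x).1) (calabi_eq_zero hK hC hbound)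
  ext i j
  refine apply_eq_apply_of_wirtinger_eq_zero (f := K.g i j) (fun k => ?_) (fun k => ?_) x y
  · rw [← matrixDeriv_apply, matrixDeriv_d, hchristoffel, Matrix.zero_mul, Matrix.zero_apply]
  · rw [← matrixDeriv_apply, matrixDeriv_dbar, hchristoffel, Matrix.conjTranspose_zero,
      Matrix.mul_zero, Matrix.zero_apply]

end KahlerMetric

theorem eq_of_ricMat_eq_zero {N : ℕ} {C : ℝ} {g : Cn N → Matrix (Fin N) (Fin N) ℂ}
    (hg : IsKahlerMatrixField g) (hC : 0 < C) (hbound : ∀ x, g x ∈ Set.Icc (C⁻¹ • 1) (C • 1))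
    (hric : ∀ x, ricMat g x = 0) (x y : Cn N) : g x = g y :=
  have hpos x := posDef_of_smul_one_le (inv_pos.2 hC) (hbound x).1
  KahlerMetric.metricAt_eq_metricAt (K := .ofMatrixField hg hpos)
    (KahlerMetric.isRicciFlat_of_ricMat_eq_zero hpos hric) hC hbound x y

end StaticLiouville

section Flow

lemma eq_apply_of_hasDerivAt_zero {E : Type*} [NormedAddCommGroup E] [NormedSpace ℝ E]
    {f : ℝ → E} {b t : ℝ} (h : ∀ s ≤ b, HasDerivAt f 0 s) (ht : t ≤ b) : f t = f b :=
  (constant_of_has_deriv_right_zero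
    (fun s hs => (h s hs.2).continuousAt.continuousWithinAt)
    (fun s hs => (h s hs.2.le).hasDerivWithinAt) b ⟨ht, le_rfl⟩).symm

section MatrixCurves

variable {n : Type*} {M M' : ℝ → Matrix n n ℂ} {A B P Q : Matrix n n ℂ} {b t : ℝ}

lemma eq_add_smul_of_hasDerivAt_const (hM : ∀ s ≤ b, ∀ i j, HasDerivAt (fun r => M r i j) (P i j) s)
    (ht : t ≤ b) : M t = M b + (t - b) • P := by
  ext i j
  have hconst : ∀ s ≤ b, HasDerivAt (fun r => M r i j - (r - b) • P i j) 0 s := fun s hs => by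
    simpa using (hM s hs i j).fun_sub (((hasDerivAt_id s).sub_const b).smul_const (P i j))
  have h := eq_apply_of_hasDerivAt_zero hconst ht
  rw [sub_self, zero_smul, sub_zero, sub_eq_iff_eq_add] at h
  exact h

open scoped Matrix.Norms.L2Operator in
lemma nonpos_of_forall_smul_le [Finite n] (h : ∀ k : ℝ, 0 < k → k • P ≤ B) : P ≤ 0 := by
  classical
  cases nonempty_fintype n
  have hlim : Filter.Tendsto (fun k : ℝ => k⁻¹ • B) Filter.atTop (nhds 0) := by
    simpa using (tendsto_inv_atTop_zero (𝕜 := ℝ)).smul_const B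
  refine ge_of_tendsto hlim ((Filter.eventually_gt_atTop 0).mono fun k hk => ?_)
  simpa [smul_smul, hk.ne'] using smul_le_smul_of_nonneg_left (h k hk) (inv_nonneg.2 hk.le)

lemma eq_zero_of_forall_add_smul_mem_Icc [Finite n]
    (h : ∀ k : ℝ, 0 < k → Q + k • P ∈ Set.Icc A B) : P = 0 := by
  refine le_antisymm
    (nonpos_of_forall_smul_le fun k hk => le_sub_iff_add_le'.2 (h k hk).2) (neg_nonpos.1 ?_)
  refine nonpos_of_forall_smul_le (B := Q - A) fun k hk => ?_
  rw [smul_neg, neg_le_sub_iff_le_add]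
  exact (h k hk).1

variable [Fintype n] [DecidableEq n]

lemma det_eq_of_trace_inv_mul_eq_zero
    (hM : ∀ s ≤ b, ∀ i j, HasDerivAt (fun r => M r i j) (M' s i j) s)
    (hunit : ∀ s ≤ b, IsUnit (M s).det) (htrace : ∀ s ≤ b, ((M s)⁻¹ * M' s).trace = 0)
    (ht : t ≤ b) : (M t).det = (M b).det := by
  refine eq_apply_of_hasDerivAt_zero (f := fun s => (M s).det) (fun s hs => ?_) ht
  have hadjugate : (M s).adjugate = (M s).det • (M s)⁻¹ := by
    rw [Matrix.inv_def, smul_smul, Ring.mul_inverse_cancel _ (hunit s hs), one_smul]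
  have hderiv := hasDerivAt_det (hM s hs)
  rwa [hadjugate, Matrix.smul_mul, Matrix.trace_smul, htrace s hs, smul_zero] at hderiv

end MatrixCurves

lemma ricMat_congr {N : ℕ} {g h : Cn N → Matrix (Fin N) (Fin N) ℂ}
    (hdet : ∀ x, (g x).det = (h x).det) : ricMat g = ricMat h := by
  funext x
  simp only [ricMat, hdet]

end Flow

/-- **Combined Liouville theorem for scalar-flat ancient Kähler–Ricci flows on `ℂ^{m+n}`.**
Suppose `ω∞(t)`, `t ∈ (-∞,0]`, is an ancient solution of the Kähler–Ricci flow
`∂_t ω = -Ric(ω)` on `ℂ^{m+n}` (standard complex structure, `ω` given by its coefficient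
matrix `g(t)`), with identically vanishing scalar curvature `R = tr(g⁻¹ Ric) ≡ 0` and with
`C⁻¹ ω_{ℂ^{m+n}} ≤ ω∞(t) ≤ C ω_{ℂ^{m+n}}` for some `C > 1` and all `t ≤ 0`.  Then `ω∞(t)`
is a constant-coefficient Kähler form, independent of both the space point and of `t`. -/
theorem liouville_ancient_scalar_flat_KRF
    (m n : ℕ)
    (g : ℝ → Cn (m + n) → Matrix (Fin (m + n)) (Fin (m + n)) ℂ)
    (hkahler : ∀ t ∈ Set.Iic (0 : ℝ), IsKahlerMatrixField (g t))
    -- the Kähler–Ricci flow `∂_t g_{i j̄} = -Ric_{i j̄}`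
    (hflow : ∀ t ∈ Set.Iic (0 : ℝ), ∀ (x : Cn (m + n)) (i j : Fin (m + n)),
      HasDerivAt (fun s => g s x i j) (-(ricMat (g t) x i j)) t)
    -- identically vanishing scalar curvature
    (hscalflat : ∀ t ∈ Set.Iic (0 : ℝ), ∀ x : Cn (m + n),
      Matrix.trace ((g t x)⁻¹ * ricMat (g t) x) = 0)
    -- uniform equivalence with the Euclidean Kähler form
    (C : ℝ) (hC : 1 < C)
    (hbound : ∀ t ∈ Set.Iic (0 : ℝ), ∀ (x : Cn (m + n)) (v : Fin (m + n) → ℂ),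
      C⁻¹ * (∑ i, Complex.normSq (v i))
          ≤ (∑ i, ∑ j, starRingEnd ℂ (v i) * g t x i j * v j).re ∧
      (∑ i, ∑ j, starRingEnd ℂ (v i) * g t x i j * v j).re
          ≤ C * (∑ i, Complex.normSq (v i))) :
    ∀ s ∈ Set.Iic (0 : ℝ), ∀ t ∈ Set.Iic (0 : ℝ), ∀ x y : Cn (m + n),
      g s x = g t y := by
  have hC0 : 0 < C := zero_lt_one.trans hC
  have hpinched : ∀ t ≤ 0, ∀ x, g t x ∈ Set.Icc (C⁻¹ • 1) (C • 1) := fun t ht x =>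
    mem_Icc_smul_one ((hkahler t ht).2.1 x) (hbound t ht x)
  have hdet : ∀ t ≤ 0, ∀ x, (g t x).det = (g 0 x).det := fun t ht x =>
    det_eq_of_trace_inv_mul_eq_zero (M := fun s => g s x) (M' := fun s => -ricMat (g s) x)
      (fun s hs => hflow s hs x)
      (fun s hs =>
        (posDef_of_smul_one_le (inv_pos.2 hC0) (hpinched s hs x).1).det_pos.ne'.isUnit)
      (fun s hs => by rw [Matrix.mul_neg, Matrix.trace_neg, hscalflat s hs, neg_zero]) ht
  have hricci : ∀ t ≤ 0, ricMat (g t) = ricMat (g 0) := fun t ht => ricMat_congr (hdet t ht)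
  have haffine : ∀ t ≤ 0, ∀ x, g t x = g 0 x + (t - 0) • -ricMat (g 0) x := fun t ht x =>
    eq_add_smul_of_hasDerivAt_const (fun s hs => hricci s hs ▸ hflow s hs x) ht
  have hflat (x) : ricMat (g 0) x = 0 := eq_zero_of_forall_add_smul_mem_Icc fun k hk => by
    have hk' := hpinched (-k) (neg_nonpos.2 hk.le) x
    rwa [haffine _ (neg_nonpos.2 hk.le), sub_zero, neg_smul_neg] at hk'
  have hstatic : ∀ t ≤ 0, ∀ x, g t x = g 0 x := fun t ht x => by
    rw [haffine t ht, hflat, neg_zero, smul_zero, add_zero]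
  intro s hs t ht x y
  rw [hstatic s hs, hstatic t ht]
  exact eq_of_ricMat_eq_zero (hkahler 0 Set.self_mem_Iic) hC0 (hpinched 0 le_rfl) hflat x y
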